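/- arXiv:1205.7018 — 2 statements merged into one kernel-verified Lean document; each statement's English description precedes it below -/
import Mathlib

section
/- Let 0 < ε < ε₀ and f ∈ 𝔚_{ε₀}. (1) If f'''(t) < 0 for almost every t ∈ ℝ, then for every x = (x₁,x₂) ∈ Ω_ε, B_ε(x; f) = m_R(u)·(x₁ − u) + f(u), where u = x₁ + ε − √(ε² − (x₂ − x₁²)) and m_R(u) = ε⁻¹e^{−u/ε}∫_{−∞}^u f'(t)e^{t/ε}dt. (2) If f'''(t) > 0 for almost every t ∈ ℝ, then for every x = (x₁,x₂) ∈ Ω_ε, B_ε(x; f) = m_L(u)·(x₁ − u) + f(u), where u = x₁ − ε + √(ε² − (x₂ − x₁²)) and m_L(u) = ε⁻¹e^{u/ε}∫_u^{+∞} f'(t)e^{−t/ε}dt. -/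
open MeasureTheory Set Real

/-- The average of `φ` over the interval with endpoints `a`, `b`. -/
noncomputable def intAvg (φ : ℝ → ℝ) (a b : ℝ) : ℝ := (∫ t in a..b, φ t) / (b - a)

/-- `φ` belongs to the ball of radius `ε` of (quadratic-norm) BMO on the interval `(l, r)`. -/
def memBMOe (ε l r : ℝ) (φ : ℝ → ℝ) : Prop :=
  IntegrableOn φ (Ioo l r) ∧
  IntegrableOn (fun t => (φ t) ^ 2) (Ioo l r) ∧
  ∀ c d : ℝ, l ≤ c → c < d → d ≤ r →
    intAvg (fun t => (φ t) ^ 2) c d - (intAvg φ c d) ^ 2 ≤ ε ^ 2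

/-- The Bellman function, computed with the interval `I = (0,1)`. -/
noncomputable def bellmanFn (ε : ℝ) (f : ℝ → ℝ) (x₁ x₂ : ℝ) : ℝ :=
  sSup {y | ∃ φ : ℝ → ℝ, memBMOe ε 0 1 φ ∧
    IntegrableOn (fun t => f (φ t)) (Ioo 0 1) ∧
    intAvg φ 0 1 = x₁ ∧ intAvg (fun t => (φ t) ^ 2) 0 1 = x₂ ∧
    y = intAvg (fun t => f (φ t)) 0 1}

/-- The parabolic strip `Ω_ε`. -/
def parabStrip (ε : ℝ) : Set (ℝ × ℝ) := {x | x.1 ^ 2 ≤ x.2 ∧ x.2 ≤ x.1 ^ 2 + ε ^ 2}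

/-- The parameter of the right tangent through `x`. -/
noncomputable def uRpt (ε : ℝ) (x : ℝ × ℝ) : ℝ :=
  x.1 + ε - Real.sqrt (ε ^ 2 - (x.2 - x.1 ^ 2))

/-- The class `𝔚_{ε₀}`. -/
def memWcl (ε₀ : ℝ) (f f3 : ℝ → ℝ) : Prop :=
  ContDiff ℝ 2 f ∧
  (∀ x y : ℝ, x ≤ y → deriv (deriv f) y - deriv (deriv f) x = ∫ t in x..y, f3 t) ∧
  Integrable (fun t => f t * Real.exp (-|t| / ε₀)) ∧
  Integrable (fun t => deriv f t * Real.exp (-|t| / ε₀)) ∧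
  Integrable (fun t => deriv (deriv f) t * Real.exp (-|t| / ε₀)) ∧
  Integrable (fun t => f3 t * Real.exp (-|t| / ε₀))

/-- The parameter of the left tangent through `x`. -/
noncomputable def uLpt (ε : ℝ) (x : ℝ × ℝ) : ℝ :=
  x.1 - ε + Real.sqrt (ε ^ 2 - (x.2 - x.1 ^ 2))

open MeasureTheory Set Real

noncomputable def mR (ε : ℝ) (f : ℝ → ℝ) (u : ℝ) : ℝ :=
  ε⁻¹ * Real.exp (-u / ε) * ∫ t in Iic u, deriv f t * Real.exp (t / ε)

noncomputable def BR (ε : ℝ) (f : ℝ → ℝ) (x₁ x₂ : ℝ) : ℝ :=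
  mR ε f (uRpt ε (x₁, x₂)) * (x₁ - uRpt ε (x₁, x₂)) + f (uRpt ε (x₁, x₂))

/-- hypotheses used in the first case -/
structure Good (ε : ℝ) (f : ℝ → ℝ) : Prop where
  pos : 0 < ε
  cd : ContDiff ℝ 2 f
  i0 : ∀ u, IntegrableOn (fun t => f t * Real.exp (t / ε)) (Iic u)
  i1 : ∀ u, IntegrableOn (fun t => deriv f t * Real.exp (t / ε)) (Iic u)
  i2 : ∀ u, IntegrableOn (fun t => deriv (deriv f) t * Real.exp (t / ε)) (Iic u)
  anti : Antitone (deriv (deriv f))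

namespace Good
variable {ε : ℝ} {f : ℝ → ℝ}

lemma hd0 (h : Good ε f) (t : ℝ) : HasDerivAt f (deriv f t) t :=
  (h.cd.differentiable (by norm_num) t).hasDerivAt

lemma cd1 (h : Good ε f) : ContDiff ℝ 1 (deriv f) :=
  ((contDiff_succ_iff_deriv (n := 1)).1 (by simpa using! h.cd)).2.2

lemma hd1 (h : Good ε f) (t : ℝ) : HasDerivAt (deriv f) (deriv (deriv f) t) t :=
  (h.cd1.differentiable (by norm_num) t).hasDerivAt

lemma c1 (h : Good ε f) : Continuous (deriv f) := h.cd1.continuous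

lemma c2 (h : Good ε f) : Continuous (deriv (deriv f)) := h.cd1.continuous_deriv (by norm_num)

lemma hdexp (ε t : ℝ) : HasDerivAt (fun t : ℝ => Real.exp (t / ε)) (Real.exp (t / ε) / ε) t := by
  have := ((hasDerivAt_id t).div_const ε).exp
  simpa [div_eq_mul_inv] using! this

/-- integration by parts -/
lemma parts {F F' : ℝ → ℝ} (hF : ∀ t, HasDerivAt F (F' t) t) (u : ℝ)
    (h0 : IntegrableOn (fun t => F t * Real.exp (t / ε)) (Iic u))
    (h1 : IntegrableOn (fun t => F' t * Real.exp (t / ε)) (Iic u)) :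
    (∫ t in Iic u, F t * Real.exp (t / ε)) / ε =
      F u * Real.exp (u / ε) - ∫ t in Iic u, F' t * Real.exp (t / ε) := by
  have hd : ∀ x ∈ Iic u, HasDerivAt (fun t => F t * Real.exp (t / ε))
      (F' x * Real.exp (x / ε) + F x * Real.exp (x / ε) / ε) x := by
    intro x _
    have := (hF x).mul (hdexp ε x)
    convert! this using 1
    ring
  have hi := h1.add (h0.div_const ε)
  have ht := tendsto_zero_of_hasDerivAt_of_integrableOn_Iic hd hi h0
  have := integral_Iic_of_hasDerivAt_of_tendsto' hd hi ht
  rw [integral_add h1 (h0.div_const ε), integral_div] at this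
  linarith

lemma hd_mR (h : Good ε f) (u : ℝ) : HasDerivAt (mR ε f) ((deriv f u - mR ε f u) / ε) u := by
  have hε := h.pos
  have hc : Continuous (fun t => deriv f t * Real.exp (t / ε)) := by
    have := h.c1
    fun_prop
  have e : (fun u => ∫ t in Iic u, deriv f t * Real.exp (t / ε)) = fun u =>
      (∫ t in (0:ℝ)..u, deriv f t * Real.exp (t / ε)) + ∫ t in Iic 0, deriv f t * Real.exp (t / ε) := by
    funext v
    rw [← intervalIntegral.integral_Iic_sub_Iic (h.i1 0) (h.i1 v)]; ring
  have d : HasDerivAt (fun u => ∫ t in Iic u, deriv f t * Real.exp (t / ε))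
      (deriv f u * Real.exp (u / ε)) u := by
    rw [e]
    exact (intervalIntegral.integral_hasDerivAt_right (hc.intervalIntegrable _ _)
      (hc.stronglyMeasurableAtFilter _ _) hc.continuousAt).add_const _
  have d2 : HasDerivAt (fun u : ℝ => ε⁻¹ * Real.exp (-u / ε)) (ε⁻¹ * (Real.exp (-u / ε) * (-1 / ε))) u :=
    (((hasDerivAt_id u).neg.div_const ε).exp).const_mul _
  have := d2.mul d
  convert! this using 1
  have ee : Real.exp (-u / ε) * Real.exp (u / ε) = 1 := by
    rw [← Real.exp_add]; ring_nf; simp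
  unfold mR
  set I := ∫ t in Iic u, deriv f t * Real.exp (t / ε)
  linear_combination (-(deriv f u) / ε) * ee

noncomputable def nn (ε : ℝ) (f : ℝ → ℝ) (w : ℝ) : ℝ := (deriv f w - mR ε f w) / ε

lemma hd_nn (h : Good ε f) (w : ℝ) :
    HasDerivAt (nn ε f) ((deriv (deriv f) w - nn ε f w) / ε) w :=
  ((h.hd1 w).sub (h.hd_mR w)).div_const ε

lemma nn_ge (h : Good ε f) (w : ℝ) : deriv (deriv f) w ≤ nn ε f w := by
  have hε := h.pos
  have p := parts h.hd1 w (h.i1 w) (h.i2 w)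
  have ee : Real.exp (-w / ε) * Real.exp (w / ε) = 1 := by
    rw [← Real.exp_add]; ring_nf; simp
  have hexpi : IntegrableOn (fun t : ℝ => Real.exp (t / ε)) (Iic w) := by
    have := integrableOn_exp_mul_Iic (a := ε⁻¹) (by positivity) w
    simpa [div_eq_inv_mul] using this
  have hexp : ∫ t in Iic w, Real.exp (t / ε) = ε * Real.exp (w / ε) := by
    have := integral_exp_mul_Iic (a := ε⁻¹) (by positivity) w
    simp only [div_eq_inv_mul] at *
    rw [this]; simp
  have hm : ∫ t in Iic w, deriv (deriv f) w * Real.exp (t / ε) ≤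
      ∫ t in Iic w, deriv (deriv f) t * Real.exp (t / ε) := by
    refine setIntegral_mono_on (hexpi.const_mul _) (h.i2 w) measurableSet_Iic ?_
    intro t ht
    exact mul_le_mul_of_nonneg_right (h.anti ht) (Real.exp_pos _).le
  rw [integral_const_mul, hexp] at hm
  have e2 : nn ε f w = ε⁻¹ * Real.exp (-w / ε) * ∫ t in Iic w, deriv (deriv f) t * Real.exp (t / ε) := by
    unfold nn mR
    linear_combination (-ε⁻¹ * Real.exp (-w / ε)) * p  - (deriv f w / ε) * ee
  rw [e2]
  calc deriv (deriv f) w = ε⁻¹ * Real.exp (-w / ε) * (deriv (deriv f) w * (ε * Real.exp (w / ε))) := by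
        have e3 : ε⁻¹ * ε = 1 := inv_mul_cancel₀ hε.ne'
        linear_combination (-deriv (deriv f) w) * ee -
          deriv (deriv f) w * Real.exp (-w / ε) * Real.exp (w / ε) * e3
    _ ≤ _ := mul_le_mul_of_nonneg_left hm (by positivity)

noncomputable def PP (ε : ℝ) (f : ℝ → ℝ) (x₁ x₂ w : ℝ) : ℝ :=
  f w + deriv f w * (x₁ - w) + nn ε f w / 2 * (x₂ - 2 * w * x₁ + w ^ 2)

lemma hd_PP (h : Good ε f) (x₁ x₂ w : ℝ) : HasDerivAt (PP ε f x₁ x₂)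
    ((deriv (deriv f) w - nn ε f w) / ε / 2 * ((w - x₁ - ε) ^ 2 - (ε ^ 2 - (x₂ - x₁ ^ 2)))) w := by
  have hε := h.pos
  have a := (h.hd0 w).add ((h.hd1 w).mul ((hasDerivAt_id w).const_sub x₁))
  have b := ((h.hd_nn w).div_const 2).mul
    ((((hasDerivAt_id w).const_mul 2).mul_const x₁).const_sub x₂ |>.add ((hasDerivAt_id w).pow 2))
  have := a.add b
  convert! this using 1
  simp
  field_simp
  ring

lemma BR_le_PP (h : Good ε f) {x₁ x₂ w : ℝ} (hx : x₂ - x₁ ^ 2 ≤ ε ^ 2)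
    (hw : w ≤ x₁ + ε + Real.sqrt (ε ^ 2 - (x₂ - x₁ ^ 2))) :
    PP ε f x₁ x₂ (uRpt ε (x₁, x₂)) ≤ PP ε f x₁ x₂ w := by
  have hε := h.pos
  set u := uRpt ε (x₁, x₂) with hu
  set r := Real.sqrt (ε ^ 2 - (x₂ - x₁ ^ 2)) with hr
  have hr2 : r ^ 2 = ε ^ 2 - (x₂ - x₁ ^ 2) := Real.sq_sqrt (by linarith)
  have hr0 : 0 ≤ r := Real.sqrt_nonneg _
  have hu' : u = x₁ + ε - r := rfl
  have hcont : Continuous (PP ε f x₁ x₂) :=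
    continuous_iff_continuousAt.2 fun t => (h.hd_PP x₁ x₂ t).continuousAt
  have hn : ∀ t, (deriv (deriv f) t - nn ε f t) / ε / 2 ≤ 0 := by
    intro t
    have := h.nn_ge t
    apply div_nonpos_of_nonpos_of_nonneg _ (by norm_num)
    exact div_nonpos_of_nonpos_of_nonneg (by linarith) hε.le
  rcases le_total w u with hwu | hwu
  · have : AntitoneOn (PP ε f x₁ x₂) (Iic u) := by
      refine antitoneOn_of_deriv_nonpos (convex_Iic u) hcont.continuousOn
        (fun t _ => (h.hd_PP x₁ x₂ t).differentiableAt.differentiableWithinAt) ?_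
      intro t ht
      rw [interior_Iic, mem_Iio] at ht
      rw [(h.hd_PP x₁ x₂ t).deriv, ← hr2]
      refine mul_nonpos_of_nonpos_of_nonneg (hn t) ?_
      nlinarith
    exact this hwu (mem_Iic.2 le_rfl) hwu
  · have : MonotoneOn (PP ε f x₁ x₂) (Icc u (x₁ + ε + r)) := by
      refine monotoneOn_of_deriv_nonneg (convex_Icc _ _) hcont.continuousOn
        (fun t _ => (h.hd_PP x₁ x₂ t).differentiableAt.differentiableWithinAt) ?_
      intro t ht
      rw [interior_Icc, mem_Ioo] at ht
      rw [(h.hd_PP x₁ x₂ t).deriv, ← hr2]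
      refine mul_nonneg_of_nonpos_of_nonpos (hn t) ?_
      nlinarith
    exact this ⟨le_rfl, by linarith⟩ ⟨hwu, hw⟩ hwu

lemma PP_eq_BR (h : Good ε f) {x₁ x₂ : ℝ} (hx : x₂ - x₁ ^ 2 ≤ ε ^ 2) :
    PP ε f x₁ x₂ (uRpt ε (x₁, x₂)) = BR ε f x₁ x₂ := by
  have hε := h.pos
  have hr2 : (Real.sqrt (ε ^ 2 - (x₂ - x₁ ^ 2))) ^ 2 = ε ^ 2 - (x₂ - x₁ ^ 2) :=
    Real.sq_sqrt (by linarith)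
  have hu : uRpt ε (x₁, x₂) = x₁ + ε - Real.sqrt (ε ^ 2 - (x₂ - x₁ ^ 2)) := rfl
  set u := uRpt ε (x₁, x₂)
  set r := Real.sqrt (ε ^ 2 - (x₂ - x₁ ^ 2))
  have hq : x₂ - 2 * u * x₁ + u ^ 2 = -2 * ε * (x₁ - u) := by
    rw [hu]; linear_combination hr2
  have : BR ε f x₁ x₂ = mR ε f u * (x₁ - u) + f u := rfl
  rw [this, PP, hq, nn]
  field_simp
  ring

lemma cont_mR (h : Good ε f) : Continuous (mR ε f) :=
  continuous_iff_continuousAt.2 fun t => (h.hd_mR t).continuousAt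

lemma cont_BR (h : Good ε f) : Continuous (fun p : ℝ × ℝ => BR ε f p.1 p.2) := by
  have h1 := h.cont_mR
  have h2 := h.cd.continuous
  unfold BR uRpt
  fun_prop

lemma BR_diag (h : Good ε f) (y : ℝ) : BR ε f y (y ^ 2) = f y := by
  have hε := h.pos
  have : uRpt ε (y, y ^ 2) = y := by
    simp [uRpt, Real.sqrt_sq hε.le]
  simp [BR, this]

end Good

open MeasureTheory Set Real

lemma bdd_ii {g : ℝ → ℝ} {M : ℝ} (hm : AEStronglyMeasurable g volume) (hb : ∀ t, |g t| ≤ M)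
    (c d : ℝ) : IntervalIntegrable g volume c d := by
  rw [intervalIntegrable_iff]
  exact Measure.integrableOn_of_bounded (M := M) (by simp) hm (Filter.Eventually.of_forall hb)

lemma bdd_li {g : ℝ → ℝ} {M : ℝ} (hm : AEStronglyMeasurable g volume) (hb : ∀ t, |g t| ≤ M) :
    LocallyIntegrable g volume := by
  refine (locallyIntegrable_const M).mono hm (Filter.Eventually.of_forall fun t => ?_)
  have := (hb t).trans (le_abs_self M)
  simpa using this

lemma intAvg_bound {g : ℝ → ℝ} {M : ℝ} (hb : ∀ t, |g t| ≤ M) {c d : ℝ} (hcd : c < d) :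
    |intAvg g c d| ≤ M := by
  have := intervalIntegral.norm_integral_le_of_norm_le_const (a := c) (b := d) (f := g) (C := M)
    (fun t _ => hb t)
  unfold intAvg
  rw [abs_div, abs_of_pos (sub_pos.2 hcd), div_le_iff₀ (sub_pos.2 hcd)]
  simpa [abs_of_pos (sub_pos.2 hcd)] using this

lemma intAvg_add {g : ℝ → ℝ} {M : ℝ} (hm : AEStronglyMeasurable g volume) (hb : ∀ t, |g t| ≤ M)
    {c e d : ℝ} (h1 : c < e) (h2 : e < d) :
    (d - c) * intAvg g c d = (e - c) * intAvg g c e + (d - e) * intAvg g e d := by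
  unfold intAvg
  rw [mul_div_cancel₀ _ (by linarith), mul_div_cancel₀ _ (by linarith),
    mul_div_cancel₀ _ (by linarith), intervalIntegral.integral_add_adjacent_intervals
      (bdd_ii hm hb _ _) (bdd_ii hm hb _ _)]

lemma intAvg_cont_right {g : ℝ → ℝ} {M : ℝ} (hm : AEStronglyMeasurable g volume)
    (hb : ∀ t, |g t| ≤ M) {c h d : ℝ} (h1 : c < h) :
    ContinuousOn (fun e => intAvg g c e) (Icc h d) := by
  unfold intAvg
  refine ContinuousOn.div (intervalIntegral.continuous_primitive (fun a b => bdd_ii hm hb a b) c).continuousOn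
    (by fun_prop) ?_
  intro x hx
  have := hx.1
  exact (sub_pos.2 (by linarith)).ne'

lemma intAvg_cont_left {g : ℝ → ℝ} {M : ℝ} (hm : AEStronglyMeasurable g volume)
    (hb : ∀ t, |g t| ≤ M) {c h d : ℝ} (h1 : h < d) :
    ContinuousOn (fun e => intAvg g e d) (Icc c h) := by
  unfold intAvg
  refine ContinuousOn.div ?_ (by fun_prop) ?_
  · have := (intervalIntegral.continuous_primitive (fun a b => bdd_ii hm hb a b) d).neg
    refine this.continuousOn.congr ?_
    intro x _
    exact intervalIntegral.integral_symm _ _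
  · intro x hx
    have := hx.2
    exact (sub_pos.2 (by linarith)).ne'

/-- good region -/
def GR (ε w y₁ y₂ : ℝ) : Prop :=
  w - ε ≤ y₁ ∨ y₂ - 2 * (w - ε) * y₁ + (w - ε) ^ 2 - ε ^ 2 ≤ 0

lemma GR_le {ε w y₁ y₂ : ℝ} (h : GR ε w y₁ y₂) :
    w ≤ y₁ + ε + Real.sqrt (ε ^ 2 - (y₂ - y₁ ^ 2)) := by
  have hs := Real.sqrt_nonneg (ε ^ 2 - (y₂ - y₁ ^ 2))
  by_cases h1 : w - ε ≤ y₁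
  · linarith
  · rcases h with h | h
    · exact absurd h h1
    · push Not at h1
      have : w - ε - y₁ ≤ Real.sqrt (ε ^ 2 - (y₂ - y₁ ^ 2)) := by
        apply Real.le_sqrt_of_sq_le
        nlinarith
      linarith

lemma path_ivt {ε w h d : ℝ} {Y₁ Y₂ : ℝ → ℝ} (c1 : ContinuousOn Y₁ (uIcc h d))
    (c2 : ContinuousOn Y₂ (uIcc h d)) (hv : ∀ e ∈ uIcc h d, Y₂ e - Y₁ e ^ 2 < ε ^ 2)
    (hb : ¬ GR ε w (Y₁ h) (Y₂ h)) (hX : w - ε < Y₁ d) :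
    ∃ e ∈ uIcc h d, Y₁ e ≤ w - ε ∧
      Y₂ e - 2 * (w - ε) * Y₁ e + (w - ε) ^ 2 - ε ^ 2 = 0 := by
  set G : ℝ → ℝ := fun e => min (w - ε - Y₁ e)
    (Y₂ e - 2 * (w - ε) * Y₁ e + (w - ε) ^ 2 - ε ^ 2) with hG
  have hc : ContinuousOn G (uIcc h d) := by
    apply ContinuousOn.inf <;> fun_prop
  unfold GR at hb
  push Not at hb
  have h1 : 0 ≤ G h := le_min (by linarith [hb.1]) hb.2.le
  have h2 : G d ≤ 0 := (min_le_left _ _).trans (by linarith)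
  obtain ⟨e, he, h0⟩ := intermediate_value_uIcc hc (mem_uIcc.2 (Or.inr ⟨h2, h1⟩))
  refine ⟨e, he, ?_, ?_⟩
  · have : G e ≤ w - ε - Y₁ e := min_le_left _ _
    linarith
  · rcases min_choice (w - ε - Y₁ e) (Y₂ e - 2 * (w - ε) * Y₁ e + (w - ε) ^ 2 - ε ^ 2) with h3 | h3
    · exfalso
      have h4 : G e = w - ε - Y₁ e := h3
      have h5 : Y₁ e = w - ε := by linarith
      have h6 : G e ≤ (Y₂ e - 2 * (w - ε) * Y₁ e + (w - ε) ^ 2 - ε ^ 2) := min_le_right _ _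
      have := hv e he
      rw [h0] at h6
      rw [← h5] at h6
      nlinarith
    · exact h3.symm.trans h0

section
variable {ε ε' M : ℝ} {f ψ : ℝ → ℝ}

lemma conclude (h : Good ε f) (hm : AEStronglyMeasurable ψ volume) (hb : ∀ t, |ψ t| ≤ M)
    (hm2 : AEStronglyMeasurable (fun t => ψ t ^ 2) volume) (hb2 : ∀ t, |ψ t ^ 2| ≤ M ^ 2)
    {c e d : ℝ} (h1 : c < e) (h2 : e < d)
    (v0 : intAvg (fun t => ψ t ^ 2) c d - (intAvg ψ c d) ^ 2 ≤ ε ^ 2)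
    (v1 : intAvg (fun t => ψ t ^ 2) c e - (intAvg ψ c e) ^ 2 ≤ ε ^ 2)
    (v2 : intAvg (fun t => ψ t ^ 2) e d - (intAvg ψ e d) ^ 2 ≤ ε ^ 2)
    (g1 : GR ε (uRpt ε (intAvg ψ c d, intAvg (fun t => ψ t ^ 2) c d))
      (intAvg ψ c e) (intAvg (fun t => ψ t ^ 2) c e))
    (g2 : GR ε (uRpt ε (intAvg ψ c d, intAvg (fun t => ψ t ^ 2) c d))
      (intAvg ψ e d) (intAvg (fun t => ψ t ^ 2) e d)) :
    (e - c) * BR ε f (intAvg ψ c e) (intAvg (fun t => ψ t ^ 2) c e) +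
    (d - e) * BR ε f (intAvg ψ e d) (intAvg (fun t => ψ t ^ 2) e d) ≤
    (d - c) * BR ε f (intAvg ψ c d) (intAvg (fun t => ψ t ^ 2) c d) := by
  have a1 := intAvg_add hm hb h1 h2
  have a2 := intAvg_add hm2 hb2 h1 h2
  have b1 := h.BR_le_PP v1 (GR_le g1)
  have b2 := h.BR_le_PP v2 (GR_le g2)
  rw [h.PP_eq_BR v1] at b1
  rw [h.PP_eq_BR v2] at b2
  rw [← h.PP_eq_BR v0]
  set w := uRpt ε (intAvg ψ c d, intAvg (fun t => ψ t ^ 2) c d)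
  have c1 := mul_le_mul_of_nonneg_left b1 (sub_pos.2 h1).le
  have c2 := mul_le_mul_of_nonneg_left b2 (sub_pos.2 h2).le
  refine (add_le_add c1 c2).trans (le_of_eq ?_)
  unfold Good.PP
  linear_combination (-(deriv f w) + Good.nn ε f w * w) * a1 - Good.nn ε f w / 2 * a2

lemma split (h : Good ε f) (hM : 0 < M) (hε' : ε' ^ 2 < ε ^ 2)
    (hm : AEStronglyMeasurable ψ volume) (hb : ∀ t, |ψ t| ≤ M)
    (hvar : ∀ c d : ℝ, 0 ≤ c → c < d → d ≤ 1 →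
      intAvg (fun t => ψ t ^ 2) c d - (intAvg ψ c d) ^ 2 ≤ ε' ^ 2)
    {c d : ℝ} (h0c : 0 ≤ c) (hcd : c < d) (hd1 : d ≤ 1) :
    ∃ e, min (1 / 2) (Real.sqrt (ε ^ 2 - ε' ^ 2) / (2 * M)) * (d - c) ≤ e - c ∧
      min (1 / 2) (Real.sqrt (ε ^ 2 - ε' ^ 2) / (2 * M)) * (d - c) ≤ d - e ∧
    (e - c) * BR ε f (intAvg ψ c e) (intAvg (fun t => ψ t ^ 2) c e) +
    (d - e) * BR ε f (intAvg ψ e d) (intAvg (fun t => ψ t ^ 2) e d) ≤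
    (d - c) * BR ε f (intAvg ψ c d) (intAvg (fun t => ψ t ^ 2) c d) := by
  have hm2 : AEStronglyMeasurable (fun t => ψ t ^ 2) volume := hm.pow 2
  have hb2 : ∀ t, |ψ t ^ 2| ≤ M ^ 2 := by
    intro t; rw [abs_pow]; exact pow_le_pow_left₀ (abs_nonneg _) (hb t) 2
  set κ := Real.sqrt (ε ^ 2 - ε' ^ 2) with hκ
  have hκ0 : 0 < κ := Real.sqrt_pos.2 (by linarith)
  set θ := min (1 / 2) (κ / (2 * M)) with hθ
  have hθ1 : θ ≤ 1 / 2 := min_le_left _ _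
  have hθ2 : θ ≤ κ / (2 * M) := min_le_right _ _
  have hθ0 : 0 < θ := lt_min (by norm_num) (by positivity)
  have hL : 0 < d - c := sub_pos.2 hcd
  set X₁ := intAvg ψ c d with hX1
  set X₂ := intAvg (fun t => ψ t ^ 2) c d with hX2
  set w := uRpt ε (X₁, X₂) with hw
  have hv0 := hvar c d h0c hcd hd1
  rw [← hX1, ← hX2] at hv0
  have hXw : w - ε + κ ≤ X₁ := by
    have : κ ≤ Real.sqrt (ε ^ 2 - (X₂ - X₁ ^ 2)) := Real.sqrt_le_sqrt (by linarith)
    have e1 : w = X₁ + ε - Real.sqrt (ε ^ 2 - (X₂ - X₁ ^ 2)) := rfl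
    linarith
  have hQX : X₂ - 2 * (w - ε) * X₁ + (w - ε) ^ 2 - ε ^ 2 = 0 := by
    have e1 : w = X₁ + ε - Real.sqrt (ε ^ 2 - (X₂ - X₁ ^ 2)) := rfl
    have hr2 : (Real.sqrt (ε ^ 2 - (X₂ - X₁ ^ 2))) ^ 2 = ε ^ 2 - (X₂ - X₁ ^ 2) :=
      Real.sq_sqrt (by linarith)
    rw [e1]; linear_combination hr2
  have V : ∀ c d : ℝ, 0 ≤ c → c < d → d ≤ 1 →
      intAvg (fun t => ψ t ^ 2) c d - (intAvg ψ c d) ^ 2 ≤ ε ^ 2 :=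
    fun c d a1 a2 a3 => (hvar c d a1 a2 a3).trans hε'.le
  set m := (c + d) / 2 with hmid
  have key : θ * (d - c) ≤ (d - c) / 2 := by nlinarith
  by_cases g1 : GR ε w (intAvg ψ c m) (intAvg (fun t => ψ t ^ 2) c m)
  · by_cases g2 : GR ε w (intAvg ψ m d) (intAvg (fun t => ψ t ^ 2) m d)
    · refine ⟨m, by linarith, by linarith, ?_⟩
      exact conclude h hm hb hm2 hb2 (by linarith) (by linarith) (V _ _ h0c hcd hd1)
        (V _ _ h0c (by linarith) (by linarith)) (V _ _ (by linarith) (by linarith) hd1) g1 g2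
    · have hu : uIcc m c = Icc c m := uIcc_of_ge (by linarith)
      obtain ⟨e, he, he1, he2⟩ := path_ivt (ε := ε) (w := w) (h := m) (d := c)
        (Y₁ := fun e => intAvg ψ e d) (Y₂ := fun e => intAvg (fun t => ψ t ^ 2) e d)
        (by rw [hu]; exact intAvg_cont_left hm hb (by linarith))
        (by rw [hu]; exact intAvg_cont_left hm2 hb2 (by linarith))
        (by
          intro e he
          rw [hu] at he
          exact lt_of_le_of_lt (hvar e d (by linarith [he.1]) (by linarith [he.2]) hd1) hε') g2
        (by show w - ε < X₁; linarith)
      rw [hu] at he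
      have hce : c < e := by
        rcases he.1.lt_or_eq with h5 | h5
        · exact h5
        · rw [← h5] at he1; linarith
      have hed : e < d := by linarith [he.2]
      have a1 := intAvg_add hm hb hce hed
      have a2 := intAvg_add hm2 hb2 hce hed
      rw [← hX1] at a1
      rw [← hX2] at a2
      have q : (e - c) * (intAvg (fun t => ψ t ^ 2) c e - 2 * (w - ε) * intAvg ψ c e
          + (w - ε) ^ 2 - ε ^ 2) = 0 := by
        linear_combination (-1) * a2 + 2 * (w - ε) * a1 + (d - c) * hQX - (d - e) * he2
      have q2 := (mul_eq_zero.1 q).resolve_left (by linarith)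
      have e1 := abs_le.1 (intAvg_bound hb hce)
      have e2 := abs_le.1 (intAvg_bound hb hed)
      refine ⟨e, ?_, ?_, ?_⟩
      · have t1 : (d - c) * κ ≤ (e - c) * (2 * M) := by
          have : (d - c) * (X₁ - intAvg ψ e d) = (e - c) * (intAvg ψ c e - intAvg ψ e d) := by
            linear_combination a1
          have t2 : (e - c) * (intAvg ψ c e - intAvg ψ e d) ≤ (e - c) * (2 * M) :=
            mul_le_mul_of_nonneg_left (by linarith) (by linarith)
          have t3 : (d - c) * κ ≤ (d - c) * (X₁ - intAvg ψ e d) :=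
            mul_le_mul_of_nonneg_left (by linarith) (by linarith)
          linarith
        calc θ * (d - c) ≤ κ / (2 * M) * (d - c) := mul_le_mul_of_nonneg_right hθ2 hL.le
          _ ≤ e - c := by
            rw [div_mul_eq_mul_div, div_le_iff₀ (by positivity)]; linarith
      · linarith [he.2]
      · exact conclude h hm hb hm2 hb2 hce hed (V _ _ h0c hcd hd1)
          (V _ _ h0c hce (by linarith)) (V _ _ (by linarith) hed hd1) (Or.inr q2.le) (Or.inr he2.le)
  · have hu : uIcc m d = Icc m d := uIcc_of_le (by linarith)
    obtain ⟨e, he, he1, he2⟩ := path_ivt (ε := ε) (w := w) (h := m) (d := d)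
      (Y₁ := fun e => intAvg ψ c e) (Y₂ := fun e => intAvg (fun t => ψ t ^ 2) c e)
      (by rw [hu]; exact intAvg_cont_right hm hb (by linarith))
      (by rw [hu]; exact intAvg_cont_right hm2 hb2 (by linarith))
      (by
        intro e he
        rw [hu] at he
        exact lt_of_le_of_lt (hvar c e h0c (by linarith [he.1]) (by linarith [he.2])) hε') g1
      (by show w - ε < X₁; linarith)
    rw [hu] at he
    have hed : e < d := by
      rcases he.2.lt_or_eq with h5 | h5
      · exact h5
      · rw [h5] at he1; linarith
    have hce : c < e := by linarith [he.1]
    have a1 := intAvg_add hm hb hce hed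
    have a2 := intAvg_add hm2 hb2 hce hed
    rw [← hX1] at a1
    rw [← hX2] at a2
    have q : (d - e) * (intAvg (fun t => ψ t ^ 2) e d - 2 * (w - ε) * intAvg ψ e d
        + (w - ε) ^ 2 - ε ^ 2) = 0 := by
      linear_combination (-1) * a2 + 2 * (w - ε) * a1 + (d - c) * hQX - (e - c) * he2
    have q2 := (mul_eq_zero.1 q).resolve_left (by linarith)
    have e1 := abs_le.1 (intAvg_bound hb hce)
    have e2 := abs_le.1 (intAvg_bound hb hed)
    refine ⟨e, ?_, ?_, ?_⟩
    · linarith [he.1]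
    · have t1 : (d - c) * κ ≤ (d - e) * (2 * M) := by
        have : (d - c) * (X₁ - intAvg ψ c e) = (d - e) * (intAvg ψ e d - intAvg ψ c e) := by
          linear_combination a1
        have t2 : (d - e) * (intAvg ψ e d - intAvg ψ c e) ≤ (d - e) * (2 * M) :=
          mul_le_mul_of_nonneg_left (by linarith) (by linarith)
        have t3 : (d - c) * κ ≤ (d - c) * (X₁ - intAvg ψ c e) :=
          mul_le_mul_of_nonneg_left (by linarith) (by linarith)
        linarith
      calc θ * (d - c) ≤ κ / (2 * M) * (d - c) := mul_le_mul_of_nonneg_right hθ2 hL.le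
        _ ≤ d - e := by
          rw [div_mul_eq_mul_div, div_le_iff₀ (by positivity)]; linarith
    · exact conclude h hm hb hm2 hb2 hce hed (V _ _ h0c hcd hd1)
        (V _ _ h0c hce (by linarith)) (V _ _ (by linarith) hed hd1) (Or.inr he2.le) (Or.inr q2.le)

end

open MeasureTheory Set Real

lemma nested_seq {E : ℝ → ℝ → ℝ} {θ : ℝ} (hθ : 0 < θ)
    (hsub : ∀ c d : ℝ, 0 ≤ c → c < d → d ≤ 1 →
      ∃ e, θ * (d - c) ≤ e - c ∧ θ * (d - c) ≤ d - e ∧ E c d ≤ E c e + E e d)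
    (h : 0 < E 0 1) :
    ∃ t : ℝ, ∃ a b : ℕ → ℝ, (∀ n, 0 ≤ a n ∧ a n < b n ∧ b n ≤ 1 ∧ a n ≤ t ∧ t ≤ b n ∧
      0 < E (a n) (b n)) ∧ Filter.Tendsto (fun n => b n - a n) Filter.atTop (nhds 0) := by
  let S := {p : ℝ × ℝ // 0 ≤ p.1 ∧ p.1 < p.2 ∧ p.2 ≤ 1 ∧ 0 < E p.1 p.2}
  have step : ∀ p : S, ∃ q : S, p.1.1 ≤ q.1.1 ∧ q.1.2 ≤ p.1.2 ∧
      q.1.2 - q.1.1 ≤ (1 - θ) * (p.1.2 - p.1.1) := by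
    rintro ⟨⟨c, d⟩, h0, hcd, hd, hE⟩
    simp only at h0 hcd hd hE
    obtain ⟨e, h1, h2, h3⟩ := hsub c d h0 hcd hd
    have hp : 0 < θ * (d - c) := mul_pos hθ (sub_pos.2 hcd)
    by_cases h4 : 0 < E c e
    · exact ⟨⟨⟨c, e⟩, h0, by simp only; linarith, by simp only; linarith, h4⟩, le_rfl,
        by simp only; linarith, by simp only; linarith⟩
    · exact ⟨⟨⟨e, d⟩, by simp only; linarith, by simp only; linarith, hd, by simp only; linarith⟩,
        by simp only; linarith, le_rfl, by simp only; linarith⟩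
  choose g hg1 hg2 hg3 using step
  let s : ℕ → S := fun n => g^[n] ⟨⟨0, 1⟩, le_rfl, by norm_num, le_rfl, h⟩
  have hs : ∀ n, s (n + 1) = g (s n) := fun n => Function.iterate_succ_apply' _ _ _
  have ha : Monotone (fun n => (s n).1.1) := monotone_nat_of_le_succ fun n => by
    rw [hs]; exact hg1 _
  have hb : Antitone (fun n => (s n).1.2) := antitone_nat_of_succ_le fun n => by
    rw [hs]; exact hg2 _
  have hab : (fun n => (s n).1.1) ≤ (fun n => (s n).1.2) := fun n => (s n).2.2.1.le
  have ht := Monotone.ciSup_mem_iInter_Icc_of_antitone ha hb hab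
  rw [mem_iInter] at ht
  refine ⟨_, fun n => (s n).1.1, fun n => (s n).1.2, fun n => ⟨(s n).2.1, (s n).2.2.1,
    (s n).2.2.2.1, (ht n).1, (ht n).2, (s n).2.2.2.2⟩, ?_⟩
  have hθ1 : 0 ≤ 1 - θ := by
    obtain ⟨e, h1, h2, -⟩ := hsub 0 1 le_rfl one_pos le_rfl
    linarith
  have hle : ∀ n, (s n).1.2 - (s n).1.1 ≤ (1 - θ) ^ n := by
    intro n
    induction n with
    | zero => simp [s]
    | succ n ih =>
      rw [hs, pow_succ']
      exact (hg3 _).trans (mul_le_mul_of_nonneg_left ih hθ1)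
  exact squeeze_zero (fun n => sub_nonneg.2 (hab n)) hle
    (tendsto_pow_atTop_nhds_zero_of_lt_one hθ1 (by linarith))

lemma ae_leb {g : ℝ → ℝ} (hg : LocallyIntegrable g volume) :
    ∀ᵐ t : ℝ, ∀ a b : ℕ → ℝ, (∀ n, a n < b n ∧ a n ≤ t ∧ t ≤ b n) →
      Filter.Tendsto (fun n => b n - a n) Filter.atTop (nhds 0) →
      Filter.Tendsto (fun n => intAvg g (a n) (b n)) Filter.atTop (nhds (g t)) := by
  filter_upwards [IsUnifLocDoublingMeasure.ae_tendsto_average (μ := (volume : Measure ℝ)) hg 1]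
    with t ht a b hab hlim
  have hball : ∀ n, Metric.closedBall ((a n + b n) / 2) ((b n - a n) / 2) = Icc (a n) (b n) := by
    intro n
    rw [Real.closedBall_eq_Icc]; congr 1 <;> ring
  have := ht (fun n => (a n + b n) / 2) (fun n => (b n - a n) / 2) (l := Filter.atTop) (by
      rw [tendsto_nhdsWithin_iff]
      refine ⟨by simpa using hlim.div_const 2, Filter.Eventually.of_forall fun n => ?_⟩
      have := (hab n).1
      simp only [mem_Ioi]; linarith) (Filter.Eventually.of_forall fun n => by
      rw [one_mul, hball]; exact (hab n).2)
  refine this.congr fun n => ?_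
  rw [hball, setAverage_eq, integral_Icc_eq_integral_Ioc, intAvg,
    intervalIntegral.integral_of_le (hab n).1.le]
  simp [Measure.real, (sub_pos.2 (hab n).1).le, div_eq_inv_mul]

lemma core {ε ε' M : ℝ} {f ψ : ℝ → ℝ} (h : Good ε f) (hM : 0 < M) (hε' : ε' ^ 2 < ε ^ 2)
    (hm : AEStronglyMeasurable ψ volume) (hb : ∀ t, |ψ t| ≤ M)
    (hvar : ∀ c d : ℝ, 0 ≤ c → c < d → d ≤ 1 →
      intAvg (fun t => ψ t ^ 2) c d - (intAvg ψ c d) ^ 2 ≤ ε' ^ 2) :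
    intAvg (fun t => f (ψ t)) 0 1 ≤ BR ε f (intAvg ψ 0 1) (intAvg (fun t => ψ t ^ 2) 0 1) := by
  have hm2 : AEStronglyMeasurable (fun t => ψ t ^ 2) volume := hm.pow 2
  have hb2 : ∀ t, |ψ t ^ 2| ≤ M ^ 2 := by
    intro t; rw [abs_pow]; exact pow_le_pow_left₀ (abs_nonneg _) (hb t) 2
  have hfc := h.cd.continuous
  have hmf : AEStronglyMeasurable (fun t => f (ψ t)) volume := hfc.comp_aestronglyMeasurable hm
  obtain ⟨K1, hK1⟩ := (isCompact_Icc (a := -M) (b := M)).exists_bound_of_continuousOn hfc.continuousOn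
  have hbf : ∀ t, |f (ψ t)| ≤ K1 := fun t => hK1 _ (abs_le.1 (hb t))
  obtain ⟨K2, hK2⟩ := ((isCompact_Icc (a := -M) (b := M)).prod
    (isCompact_Icc (a := -M ^ 2) (b := M ^ 2))).exists_bound_of_continuousOn h.cont_BR.continuousOn
  set A : ℝ → ℝ → ℝ := fun c d => intAvg ψ c d with hA
  set S : ℝ → ℝ → ℝ := fun c d => intAvg (fun t => ψ t ^ 2) c d with hS
  set R : ℝ → ℝ → ℝ := fun c d => intAvg (fun t => f (ψ t)) c d - BR ε f (A c d) (S c d) with hR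
  set K := K1 + K2 with hK
  have hRK : ∀ c d, c < d → R c d ≤ K := by
    intro c d hcd
    have r1 := abs_le.1 (intAvg_bound hbf hcd)
    have r2 := hK2 (A c d, S c d) ⟨abs_le.1 (intAvg_bound hb hcd), by
      have := abs_le.1 (intAvg_bound hb2 hcd)
      exact ⟨by linarith [this.1], this.2⟩⟩
    have r3 := (abs_le.1 r2).1
    simp only at r3
    show intAvg (fun t => f (ψ t)) c d - BR ε f (A c d) (S c d) ≤ K
    linarith [r1.2]
  have hK0 : 0 ≤ K := by
    have a1 := (abs_nonneg _).trans (hbf 0)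
    have a2 := (norm_nonneg _).trans (hK2 (0, 0) ⟨⟨by simp; linarith, hM.le⟩, ⟨by simp; positivity, by simp; positivity⟩⟩)
    exact add_nonneg a1 a2
  suffices H : ∀ η : ℝ, 0 < η → R 0 1 ≤ (1 + K) * η by
    have : R 0 1 ≤ 0 := by
      refine le_of_forall_pos_le_add fun x hx => ?_
      have := H (x / (1 + K)) (by positivity)
      rw [mul_div_cancel₀ _ (by positivity)] at this
      linarith
    have : intAvg (fun t => f (ψ t)) 0 1 - BR ε f (A 0 1) (S 0 1) ≤ 0 := this
    linarith
  intro η hη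
  have hae := (ae_leb (bdd_li hm hb)).and ((ae_leb (bdd_li hm2 hb2)).and (ae_leb (bdd_li hmf hbf)))
  obtain ⟨U, hNU, hUo, hUm⟩ := Set.exists_isOpen_lt_of_lt (μ := volume) _ (ENNReal.ofReal η)
    (by rw [ae_iff.1 hae]; simpa using hη)
  set ι : ℝ → ℝ := U.indicator (fun _ => 1) with hι
  have hιm : AEStronglyMeasurable ι volume :=
    (aestronglyMeasurable_const).indicator hUo.measurableSet
  have hιb : ∀ t, |ι t| ≤ 1 := by
    intro t
    by_cases ht : t ∈ U <;> simp [hι, ht]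
  have hι1 : intAvg ι 0 1 ≤ η := by
    have : intAvg ι 0 1 = ∫ t in Ioc (0:ℝ) 1, ι t := by
      simp [intAvg, intervalIntegral.integral_of_le]
    rw [this, hι, integral_indicator hUo.measurableSet, Measure.restrict_restrict hUo.measurableSet]
    simp only [integral_const, smul_eq_mul, mul_one]
    rw [measureReal_restrict_apply_univ]
    refine ENNReal.toReal_le_of_le_ofReal hη.le ?_
    exact (measure_mono inter_subset_left).trans hUm.le
  by_contra hcon
  push Not at hcon
  set E : ℝ → ℝ → ℝ := fun c d => (d - c) * (R c d - η - K * intAvg ι c d) with hE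
  obtain ⟨t, a, b, hab, hlim⟩ := nested_seq (E := E)
    (θ := min (1 / 2) (Real.sqrt (ε ^ 2 - ε' ^ 2) / (2 * M)))
    (lt_min (by norm_num) (div_pos (Real.sqrt_pos.2 (by linarith)) (by linarith)))
    (by
      intro c d h0 hcd hd
      obtain ⟨e, e1, e2, e3⟩ := split h hM hε' hm hb hvar h0 hcd hd
      have hp : 0 < min (1 / 2) (Real.sqrt (ε ^ 2 - ε' ^ 2) / (2 * M)) * (d - c) :=
        mul_pos (lt_min (by norm_num) (div_pos (Real.sqrt_pos.2 (by linarith)) (by linarith)))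
          (sub_pos.2 hcd)
      have hce : c < e := by linarith
      have hed : e < d := by linarith
      refine ⟨e, e1, e2, ?_⟩
      have a1 := intAvg_add hmf hbf hce hed
      have a2 := intAvg_add hιm hιb hce hed
      simp only [hE, hR, hA, hS]
      linear_combination a1 - K * a2 + e3)
    (by
      simp only [hE]
      have := mul_le_mul_of_nonneg_left hι1 hK0
      linarith)
  by_cases htU : t ∈ U
  · have : ∃ n, Icc (a n) (b n) ⊆ U := by
      obtain ⟨r, hr, hrU⟩ := Metric.isOpen_iff.1 hUo t htU
      obtain ⟨n, hn⟩ := (hlim.eventually (gt_mem_nhds hr)).exists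
      refine ⟨n, fun y hy => hrU ?_⟩
      rw [Metric.mem_ball, Real.dist_eq, abs_lt]
      have := hab n
      constructor <;> linarith [hy.1, hy.2]
    obtain ⟨n, hn⟩ := this
    obtain ⟨-, h2, -, -, -, h6⟩ := hab n
    have e1 : intAvg ι (a n) (b n) = 1 := by
      have : ∫ t in (a n)..(b n), ι t = ∫ t in (a n)..(b n), (1:ℝ) := by
        apply intervalIntegral.integral_congr
        intro y hy
        rw [uIcc_of_le h2.le] at hy
        simp [hι, hn hy]
      rw [intAvg, this]
      simp [(sub_pos.2 h2).ne']
    have h7 := hRK _ _ h2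
    have h8 : R (a n) (b n) - η - K * intAvg ι (a n) (b n) < 0 := by rw [e1]; linarith
    exact absurd h6 (not_lt.2 (mul_nonpos_of_nonneg_of_nonpos (sub_pos.2 h2).le h8.le))
  · have hleb := not_not.1 (fun hc => htU (hNU hc))
    obtain ⟨l1, l2, l3⟩ := hleb
    have hab' : ∀ n, a n < b n ∧ a n ≤ t ∧ t ≤ b n :=
      fun n => ⟨(hab n).2.1, (hab n).2.2.2.1, (hab n).2.2.2.2.1⟩
    have t1 := l1 a b hab' hlim
    have t2 := l2 a b hab' hlim
    have t3 := l3 a b hab' hlim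
    have t4 : Filter.Tendsto (fun n => R (a n) (b n)) Filter.atTop
        (nhds (f (ψ t) - BR ε f (ψ t) (ψ t ^ 2))) := by
      have t5 := t1.prodMk_nhds t2
      have t6 := h.cont_BR.tendsto (ψ t, ψ t ^ 2)
      have t7 := Filter.Tendsto.comp t6 t5
      exact Filter.Tendsto.sub t3 t7
    rw [h.BR_diag, sub_self] at t4
    obtain ⟨n, hn⟩ := (t4.eventually (gt_mem_nhds hη)).exists
    obtain ⟨-, h2, -, -, -, h6⟩ := hab n
    have h9 : 0 ≤ intAvg ι (a n) (b n) := by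
      refine div_nonneg (intervalIntegral.integral_nonneg h2.le fun y _ => ?_) (sub_pos.2 h2).le
      exact indicator_nonneg (fun _ _ => zero_le_one) _
    have h8 : R (a n) (b n) - η - K * intAvg ι (a n) (b n) < 0 := by
      have := mul_nonneg hK0 h9
      linarith
    exact absurd h6 (not_lt.2 (mul_nonpos_of_nonneg_of_nonpos (sub_pos.2 h2).le h8.le))

open MeasureTheory Set Real

lemma ev_mono {g g' : ℝ → ℝ} (hd : ∀ t, HasDerivAt g (g' t) t)
    (hm : ∃ K, MonotoneOn g' (Ici K) ∨ AntitoneOn g' (Ici K)) :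
    ∃ K, MonotoneOn g (Ici K) ∨ AntitoneOn g (Ici K) := by
  have hc : Continuous g := continuous_iff_continuousAt.2 fun t => (hd t).continuousAt
  have sgn : ∃ K, (∀ t, K < t → 0 ≤ g' t) ∨ (∀ t, K < t → g' t ≤ 0) := by
    obtain ⟨K, hm | hm⟩ := hm
    · by_cases hb : ∃ b, K ≤ b ∧ 0 ≤ g' b
      · obtain ⟨b, hb, hb0⟩ := hb
        exact ⟨b, Or.inl fun t ht => hb0.trans (hm hb (hb.trans ht.le) ht.le)⟩
      · push Not at hb
        exact ⟨K, Or.inr fun t ht => (hb t ht.le).le⟩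
    · by_cases hb : ∃ b, K ≤ b ∧ g' b ≤ 0
      · obtain ⟨b, hb, hb0⟩ := hb
        exact ⟨b, Or.inr fun t ht => (hm hb (hb.trans ht.le) ht.le).trans hb0⟩
      · push Not at hb
        exact ⟨K, Or.inl fun t ht => (hb t ht.le).le⟩
  obtain ⟨K, hK | hK⟩ := sgn
  · refine ⟨K, Or.inl (monotoneOn_of_deriv_nonneg (convex_Ici K) hc.continuousOn
      (fun t _ => (hd t).differentiableAt.differentiableWithinAt) ?_)⟩
    intro t ht
    rw [interior_Ici] at ht
    rw [(hd t).deriv]; exact hK t ht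
  · refine ⟨K, Or.inr (antitoneOn_of_deriv_nonpos (convex_Ici K) hc.continuousOn
      (fun t _ => (hd t).differentiableAt.differentiableWithinAt) ?_)⟩
    intro t ht
    rw [interior_Ici] at ht
    rw [(hd t).deriv]; exact hK t ht

lemma dom_pos {g : ℝ → ℝ} (hc : Continuous g)
    (hm : ∃ K, MonotoneOn g (Ici K) ∨ AntitoneOn g (Ici K)) :
    ∃ C, ∀ x y, 0 ≤ y → y ≤ x → |g y| ≤ C + |g x| := by
  obtain ⟨K, hm⟩ := hm
  obtain ⟨C, hC⟩ := (isCompact_Icc (a := 0) (b := max K 0)).exists_bound_of_continuousOn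
    hc.continuousOn
  refine ⟨C, fun x y hy hyx => ?_⟩
  by_cases h : y ≤ max K 0
  · have := hC y ⟨hy, h⟩
    rw [Real.norm_eq_abs] at this
    linarith [abs_nonneg (g x)]
  · push Not at h
    have h1 := hC (max K 0) ⟨le_max_right _ _, le_rfl⟩
    rw [Real.norm_eq_abs] at h1
    have k1 : max K 0 ∈ Ici K := mem_Ici.2 (le_max_left _ _)
    have k2 : y ∈ Ici K := (le_max_left K 0).trans h.le
    have k3 : x ∈ Ici K := le_trans k2 hyx
    have h2 := abs_le.1 h1
    have h3 := abs_le.1 (le_refl |g x|)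
    have h4 := abs_nonneg (g x)
    have h5 := (abs_nonneg _).trans h1
    rw [abs_le]
    rcases hm with hm | hm
    · have m1 := hm k1 k2 h.le
      have m2 := hm k2 k3 hyx
      constructor <;> linarith [h2.1, h2.2, h3.1, h3.2]
    · have m1 := hm k1 k2 h.le
      have m2 := hm k2 k3 hyx
      constructor <;> linarith [h2.1, h2.2, h3.1, h3.2]

lemma Good.dom {ε : ℝ} {f : ℝ → ℝ} (h : Good ε f) :
    ∃ C, ∀ x y, ((0 ≤ y ∧ y ≤ x) ∨ (x ≤ y ∧ y ≤ 0)) → |f y| ≤ C + |f x| := by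
  obtain ⟨C1, h1⟩ := dom_pos h.cd.continuous (ev_mono h.hd0 (ev_mono h.hd1
    ⟨0, Or.inr (h.anti.antitoneOn _)⟩))
  have d0 : ∀ t, HasDerivAt (fun t => f (-t)) (-deriv f (-t)) t := fun t => by
    simpa using! (h.hd0 (-t)).comp t (hasDerivAt_neg t)
  have d1 : ∀ t, HasDerivAt (fun t => -deriv f (-t)) (deriv (deriv f) (-t)) t := fun t => by
    simpa using! ((h.hd1 (-t)).comp t (hasDerivAt_neg t)).neg
  obtain ⟨C2, h2⟩ := dom_pos (g := fun t => f (-t)) (h.cd.continuous.comp continuous_neg)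
    (ev_mono d0 (ev_mono d1 ⟨0, Or.inl fun a _ b _ hab => h.anti (by linarith)⟩))
  refine ⟨max C1 C2, fun x y hxy => ?_⟩
  rcases hxy with ⟨a, b⟩ | ⟨a, b⟩
  · exact (h1 x y a b).trans (by linarith [le_max_left C1 C2])
  · have := h2 (-x) (-y) (by linarith) (by linarith)
    simp only [neg_neg] at this
    exact this.trans (by linarith [le_max_right C1 C2])

lemma var_le {φ ψ : ℝ → ℝ} {c d a b L : ℝ} (hcd : c < d)
    (h1 : IntervalIntegrable φ volume c d) (h2 : IntervalIntegrable (fun t => φ t ^ 2) volume c d)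
    (k1 : IntervalIntegrable ψ volume c d) (k2 : IntervalIntegrable (fun t => ψ t ^ 2) volume c d)
    (ha : a = intAvg φ c d)
    (hp : ∀ t ∈ Ioo c d, (ψ t - b) ^ 2 ≤ L * (φ t - a) ^ 2) :
    intAvg (fun t => ψ t ^ 2) c d - (intAvg ψ c d) ^ 2 ≤
      L * (intAvg (fun t => φ t ^ 2) c d - (intAvg φ c d) ^ 2) := by
  have hL := sub_pos.2 hcd
  have key : ∀ (g : ℝ → ℝ) (s : ℝ), IntervalIntegrable g volume c d →
      IntervalIntegrable (fun t => g t ^ 2) volume c d →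
      IntervalIntegrable (fun t => (g t - s) ^ 2) volume c d ∧
      (∫ t in c..d, (g t - s) ^ 2) =
        (d - c) * (intAvg (fun t => g t ^ 2) c d - 2 * s * intAvg g c d + s ^ 2) := by
    intro g s i1 i2
    have e : (fun t => (g t - s) ^ 2) = fun t => (g t ^ 2 - (2 * s) * g t) + s ^ 2 := by
      funext t; ring
    have i3 := i2.sub (i1.const_mul (2 * s))
    have i4 := i3.add (intervalIntegrable_const (c := s ^ 2))
    refine ⟨by rw [e]; exact i4, ?_⟩
    rw [e, intervalIntegral.integral_add i3 intervalIntegrable_const,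
      intervalIntegral.integral_sub i2 (i1.const_mul (2 * s)), intervalIntegral.integral_const_mul,
      intervalIntegral.integral_const]
    unfold intAvg
    simp only [smul_eq_mul]
    field_simp
  obtain ⟨j1, e1⟩ := key φ a h1 h2
  obtain ⟨j2, e2⟩ := key ψ b k1 k2
  have := intervalIntegral.integral_mono_on_of_le_Ioo hcd.le j2 (j1.const_mul L) hp
  rw [intervalIntegral.integral_const_mul, e1, e2] at this
  have h3 : (intAvg (fun t => ψ t ^ 2) c d - 2 * b * intAvg ψ c d + b ^ 2) ≤
      L * (intAvg (fun t => φ t ^ 2) c d - 2 * a * intAvg φ c d + a ^ 2) := by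
    refine le_of_mul_le_mul_left ?_ hL
    linarith
  rw [ha] at h3
  nlinarith [sq_nonneg (intAvg ψ c d - b)]

/-- truncation -/
noncomputable def tr (N x : ℝ) : ℝ := max (-N) (min N x)

lemma tr_lip (N x y : ℝ) : |tr N x - tr N y| ≤ |x - y| := by
  unfold tr
  exact (abs_max_sub_max_le_max _ _ _ _).trans (by
    simp only [sub_self, abs_zero]
    refine max_le (abs_nonneg _) ((abs_min_sub_min_le_max _ _ _ _).trans ?_)
    simp)

lemma intAvg01 (g : ℝ → ℝ) : intAvg g 0 1 = ∫ t in Ioo (0:ℝ) 1, g t := by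
  simp [intAvg, intervalIntegral.integral_of_le, integral_Ioc_eq_integral_Ioo]

lemma ii_of_Ioo {g : ℝ → ℝ} (hg : IntegrableOn g (Ioo 0 1)) {c d : ℝ} (h0 : 0 ≤ c) (hcd : c < d)
    (hd : d ≤ 1) : IntervalIntegrable g volume c d := by
  rw [intervalIntegrable_iff_integrableOn_Ioo_of_le hcd.le]
  exact hg.mono_set (Ioo_subset_Ioo h0 hd)

lemma tr_between {N : ℝ} (hN : 0 ≤ N) {l : ℝ} (h0 : 0 ≤ l) (h1 : l ≤ 1) (x : ℝ) :
    ((0 ≤ l * tr N x ∧ l * tr N x ≤ x) ∨ (x ≤ l * tr N x ∧ l * tr N x ≤ 0)) := by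
  unfold tr
  rcases le_total 0 x with hx | hx
  · left
    have a1 : 0 ≤ min N x := le_min hN hx
    rw [max_eq_right (by linarith)]
    refine ⟨mul_nonneg h0 a1, ?_⟩
    nlinarith [min_le_right N x]
  · right
    rw [min_eq_right (by linarith)]
    have a1 : max (-N) x ≤ 0 := max_le (by linarith) hx
    refine ⟨?_, mul_nonpos_of_nonneg_of_nonpos h0 a1⟩
    nlinarith [le_max_right (-N) x]

lemma tr_abs {N : ℝ} (hN : 0 ≤ N) (x : ℝ) : |tr N x| ≤ N :=
  abs_le.2 ⟨le_max_left _ _, max_le (by linarith) (min_le_left _ _)⟩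

lemma upper {ε : ℝ} {f φ : ℝ → ℝ} (h : Good ε f) (hφ : memBMOe ε 0 1 φ)
    (hfφ : IntegrableOn (fun t => f (φ t)) (Ioo 0 1)) :
    intAvg (fun t => f (φ t)) 0 1 ≤ BR ε f (intAvg φ 0 1) (intAvg (fun t => φ t ^ 2) 0 1) := by
  have hε := h.pos
  obtain ⟨hi1, hi2, hvar⟩ := hφ
  obtain ⟨C, hC⟩ := h.dom
  let l : ℕ → ℝ := fun n => (n : ℝ) / (n + 1)
  have hl0 : ∀ n, 0 ≤ l n := fun n => by positivity
  have hl1 : ∀ n, l n < 1 := fun n => by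
    simp only [l]; rw [div_lt_one (by positivity)]; linarith
  have hlt : Filter.Tendsto l Filter.atTop (nhds 1) := tendsto_natCast_div_add_atTop 1
  let ψ : ℕ → ℝ → ℝ := fun n => (Ioo (0:ℝ) 1).indicator (fun t => l n * tr (n + 1) (φ t))
  have hψ : ∀ n, ∀ t ∈ Ioo (0:ℝ) 1, ψ n t = l n * tr (n + 1) (φ t) := fun n t ht =>
    indicator_of_mem ht _
  have hN : ∀ n : ℕ, (0:ℝ) ≤ (n:ℝ) + 1 := fun n => by positivity
  have hψm : ∀ n, AEStronglyMeasurable (ψ n) volume := by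
    intro n
    rw [aestronglyMeasurable_indicator_iff measurableSet_Ioo]
    have : Continuous (fun x => l n * tr (n + 1) x) := by unfold tr; fun_prop
    exact this.comp_aestronglyMeasurable hi1.aestronglyMeasurable
  have hψb : ∀ n t, |ψ n t| ≤ (n:ℝ) + 1 := by
    intro n t
    by_cases ht : t ∈ Ioo (0:ℝ) 1
    · rw [hψ n t ht, abs_mul, abs_of_nonneg (hl0 n)]
      have := tr_abs (hN n) (φ t)
      nlinarith [abs_nonneg (tr (n + 1) (φ t)), hl1 n, hl0 n]
    · simp only [ψ, indicator_of_notMem ht, abs_zero]; exact hN n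
  have hψb2 : ∀ n t, |ψ n t ^ 2| ≤ ((n:ℝ) + 1) ^ 2 := by
    intro n t; rw [abs_pow]; exact pow_le_pow_left₀ (abs_nonneg _) (hψb n t) 2
  have hcore : ∀ n, intAvg (fun t => f (ψ n t)) 0 1 ≤
      BR ε f (intAvg (ψ n) 0 1) (intAvg (fun t => ψ n t ^ 2) 0 1) := by
    intro n
    refine core (ε' := l n * ε) (M := n + 1) h (by positivity) ?_ (hψm n) (hψb n) ?_
    · have := hl0 n
      have := hl1 n
      have : l n * ε < ε := by nlinarith
      exact pow_lt_pow_left₀ this (by have := hl0 n; positivity) (by norm_num)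
    · intro c d h0 hcd hd
      refine (var_le (L := l n ^ 2) (b := l n * tr (n + 1) (intAvg φ c d)) hcd
        (ii_of_Ioo hi1 h0 hcd hd) (ii_of_Ioo hi2 h0 hcd hd) (bdd_ii (hψm n) (hψb n) _ _)
        (bdd_ii ((hψm n).pow 2) (hψb2 n) _ _) rfl ?_).trans ?_
      · intro t ht
        rw [hψ n t ⟨by linarith [ht.1], by linarith [ht.2]⟩, ← mul_sub, mul_pow]
        exact mul_le_mul_of_nonneg_left (sq_le_sq.2 (tr_lip _ _ _)) (sq_nonneg _)
      · rw [mul_pow]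
        exact mul_le_mul_of_nonneg_left (hvar c d h0 hcd hd) (sq_nonneg _)
  have hbet : ∀ n, ∀ t ∈ Ioo (0:ℝ) 1,
      ((0 ≤ ψ n t ∧ ψ n t ≤ φ t) ∨ (φ t ≤ ψ n t ∧ ψ n t ≤ 0)) := by
    intro n t ht
    rw [hψ n t ht]
    exact tr_between (hN n) (hl0 n) (hl1 n).le _
  have habs : ∀ n, ∀ t ∈ Ioo (0:ℝ) 1, |ψ n t| ≤ |φ t| := by
    intro n t ht
    rcases hbet n t ht with ⟨a, b⟩ | ⟨a, b⟩
    · rw [abs_of_nonneg a, abs_of_nonneg (a.trans b)]; exact b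
    · rw [abs_of_nonpos b, abs_of_nonpos (a.trans b)]; linarith
  have hptw : ∀ t ∈ Ioo (0:ℝ) 1, Filter.Tendsto (fun n => ψ n t) Filter.atTop (nhds (φ t)) := by
    intro t ht
    have : Filter.Tendsto (fun n => l n * φ t) Filter.atTop (nhds (φ t)) := by
      simpa using hlt.mul_const (φ t)
    refine this.congr' ?_
    obtain ⟨N, hN⟩ := exists_nat_ge |φ t|
    filter_upwards [Filter.eventually_ge_atTop N] with n hn
    have hn' : (N:ℝ) ≤ n := by exact_mod_cast hn
    have := abs_le.1 (hN.trans hn')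
    rw [hψ n t ht, tr, min_eq_right (by linarith), max_eq_right (by linarith)]
  have lim : ∀ (g : ℝ → ℝ) (bd : ℝ → ℝ), Continuous g → IntegrableOn bd (Ioo 0 1) →
      (∀ n, ∀ t ∈ Ioo (0:ℝ) 1, |g (ψ n t)| ≤ bd t) →
      Filter.Tendsto (fun n => intAvg (fun t => g (ψ n t)) 0 1) Filter.atTop
        (nhds (intAvg (fun t => g (φ t)) 0 1)) := by
    intro g bd hg hbd hle
    simp only [intAvg01]
    refine tendsto_integral_of_dominated_convergence bd
      (fun n => (hg.comp_aestronglyMeasurable (hψm n)).restrict) hbd (fun n => ?_) ?_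
    · exact (ae_restrict_iff' measurableSet_Ioo).2 (Filter.Eventually.of_forall (hle n))
    · exact (ae_restrict_iff' measurableSet_Ioo).2 (Filter.Eventually.of_forall fun t ht =>
        (hg.tendsto _).comp (hptw t ht))
  have l1 := lim id (fun t => |φ t|) continuous_id hi1.abs habs
  have l2 := lim (fun x => x ^ 2) (fun t => φ t ^ 2) (by fun_prop) hi2 (by
    intro n t ht
    rw [abs_pow, ← sq_abs (φ t)]
    exact pow_le_pow_left₀ (abs_nonneg _) (habs n t ht) 2)
  have l3 := lim f (fun t => C + |f (φ t)|) h.cd.continuous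
    (Integrable.add (integrableOn_const (by simp)) hfφ.abs) (fun n t ht => hC _ _ (hbet n t ht))
  have t5 := l1.prodMk_nhds l2
  have t6 := h.cont_BR.tendsto (intAvg φ 0 1, intAvg (fun t => φ t ^ 2) 0 1)
  have t7 := Filter.Tendsto.comp t6 t5
  exact le_of_tendsto_of_tendsto' l3 t7 hcore

open MeasureTheory Set Real

lemma logsq_aux {a b : ℝ} (ha : 0 ≤ a) (hab : a ≤ b) :
    IntervalIntegrable (fun t => Real.log t ^ 2) volume a b ∧
    ∫ t in a..b, Real.log t ^ 2 =
      (b * Real.log b ^ 2 - 2 * (b * Real.log b) + 2 * b) -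
      (a * Real.log a ^ 2 - 2 * (a * Real.log a) + 2 * a) := by
  have hc : ContinuousOn (fun x : ℝ => x * Real.log x ^ 2 - 2 * (x * Real.log x) + 2 * x) (Icc a b) := by
    have h1 : ContinuousOn (fun x : ℝ => x * Real.log x ^ 2) (Icc a b) := by
      have : Continuous (fun x : ℝ => 4 * (Real.sqrt x * Real.log (Real.sqrt x)) ^ 2) :=
        ((Real.continuous_mul_log.comp Real.continuous_sqrt).pow 2).const_mul 4 |>.congr fun x => rfl
      refine this.continuousOn.congr fun x hx => ?_
      have hx0 : 0 ≤ x := ha.trans hx.1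
      simp only [Real.log_sqrt hx0, mul_pow, Real.sq_sqrt hx0]
      ring
    have h2 : Continuous (fun x : ℝ => 2 * (x * Real.log x)) := Real.continuous_mul_log.const_mul 2
    exact (h1.sub h2.continuousOn).add (by fun_prop)
  have hd : ∀ x ∈ Ioo a b, HasDerivAt
      (fun x : ℝ => x * Real.log x ^ 2 - 2 * (x * Real.log x) + 2 * x) (Real.log x ^ 2) x := by
    intro x hx
    have hx0 : x ≠ 0 := (lt_of_le_of_lt ha hx.1).ne'
    have hl := Real.hasDerivAt_log hx0
    have := (((hasDerivAt_id x).mul (hl.pow 2)).sub (((hasDerivAt_id x).mul hl).const_mul 2)).add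
      ((hasDerivAt_id x).const_mul 2)
    convert! this using 1
    simp
    field_simp
    ring
  have hi : IntervalIntegrable (fun t => Real.log t ^ 2) volume a b := by
    rw [intervalIntegrable_iff_integrableOn_Ioc_of_le hab]
    exact intervalIntegral.integrableOn_deriv_of_nonneg hc hd fun x _ => sq_nonneg _
  exact ⟨hi, intervalIntegral.integral_eq_sub_of_hasDerivAt_of_le hab hc hd hi⟩

lemma var_log {c d : ℝ} (hc : 0 ≤ c) (hcd : c < d) :
    intAvg (fun t => Real.log t ^ 2) c d - (intAvg Real.log c d) ^ 2 ≤ 1 := by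
  unfold intAvg
  rw [(logsq_aux hc hcd.le).2, integral_log]
  have hL := sub_pos.2 hcd
  have hd : 0 ≤ d := hc.trans hcd.le
  set A := Real.log d
  set C := Real.log c
  rw [div_pow, div_sub_div _ _ hL.ne' (by positivity), div_le_one (by positivity)]
  have : 0 ≤ (d - c) * (c * d * (A - C) ^ 2) := by positivity
  nlinarith

/-- optimizer -/
noncomputable def opt (ε u α t : ℝ) : ℝ := u + ε * min 0 (Real.log t - Real.log α)

lemma avg_opt (F : ℝ → ℝ) {ε u α : ℝ} (h0 : 0 < α) (h1 : α ≤ 1)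
    (hI : IntegrableOn (fun t => F (u + ε * (Real.log t - Real.log α))) (Ioc 0 α)) :
    IntegrableOn (fun t => F (opt ε u α t)) (Ioo 0 1) ∧
    intAvg (fun t => F (opt ε u α t)) 0 1 =
      (∫ t in Ioc 0 α, F (u + ε * (Real.log t - Real.log α))) + (1 - α) * F u := by
  have e1 : EqOn (fun t => F (opt ε u α t)) (fun t => F (u + ε * (Real.log t - Real.log α)))
      (Ioc 0 α) := by
    intro t ht
    have := Real.log_le_log ht.1 ht.2
    simp only [opt, min_eq_right (sub_nonpos.2 this)]
  have e2 : EqOn (fun t => F (opt ε u α t)) (fun _ => F u) (Ioc α 1) := by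
    intro t ht
    have := Real.log_le_log h0 ht.1.le
    simp only [opt, min_eq_left (sub_nonneg.2 this), mul_zero, add_zero]
  have i1 : IntegrableOn (fun t => F (opt ε u α t)) (Ioc 0 α) := by
    exact (integrableOn_congr_fun e1 measurableSet_Ioc).2 hI
  have i2 : IntegrableOn (fun t => F (opt ε u α t)) (Ioc α 1) :=
    (integrableOn_congr_fun e2 measurableSet_Ioc).2 (integrableOn_const (by simp))
  have hu : Ioc (0:ℝ) α ∪ Ioc α 1 = Ioc 0 1 := Ioc_union_Ioc_eq_Ioc h0.le h1
  refine ⟨?_, ?_⟩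
  · have := i1.union i2
    rw [hu] at this
    exact this.mono_set Ioo_subset_Ioc_self
  · rw [intAvg01, ← integral_Ioc_eq_integral_Ioo, ← hu,
      setIntegral_union (Ioc_disjoint_Ioc_of_le le_rfl) measurableSet_Ioc i1 i2,
      setIntegral_congr_fun measurableSet_Ioc e1, setIntegral_congr_fun measurableSet_Ioc e2]
    simp [h1]

lemma cov {ε : ℝ} {f : ℝ → ℝ} (h : Good ε f) {u α : ℝ} (h0 : 0 < α) :
    IntegrableOn (fun t => f (u + ε * (Real.log t - Real.log α))) (Ioc 0 α) ∧
    ∫ t in Ioc 0 α, f (u + ε * (Real.log t - Real.log α)) = α * f u - α * ε * mR ε f u := by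
  have hε := h.pos
  set k : ℝ → ℝ := fun t => α * Real.exp ((t - u) / ε) with hk
  have hkd : ∀ t ∈ Iic u, HasDerivWithinAt k (α * (Real.exp ((t - u) / ε) * (1 / ε))) (Iic u) t :=
    fun t _ => (((((hasDerivAt_id t).sub_const u).div_const ε).exp).const_mul α).hasDerivWithinAt
  have hlogk : ∀ t, u + ε * (Real.log (k t) - Real.log α) = t := by
    intro t
    rw [hk]
    simp only
    rw [Real.log_mul h0.ne' (Real.exp_pos _).ne', Real.log_exp]
    field_simp
    ring
  have hinj : InjOn k (Iic u) := by
    intro s _ t _ hst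
    rw [← hlogk s, ← hlogk t, hst]
  have him : k '' Iic u = Ioc 0 α := by
    ext s
    constructor
    · rintro ⟨t, ht, rfl⟩
      refine ⟨by positivity, ?_⟩
      have : Real.exp ((t - u) / ε) ≤ 1 := by
        rw [Real.exp_le_one_iff]
        exact div_nonpos_of_nonpos_of_nonneg (sub_nonpos.2 ht) hε.le
      simp only [hk]
      nlinarith
    · rintro ⟨hs0, hs1⟩
      refine ⟨u + ε * (Real.log s - Real.log α), ?_, ?_⟩
      · have := Real.log_le_log hs0 hs1
        simp only [mem_Iic]
        nlinarith
      · simp only [hk]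
        rw [add_sub_cancel_left, mul_div_cancel_left₀ _ hε.ne', Real.exp_sub, Real.exp_log hs0,
          Real.exp_log h0]
        field_simp
  have hfun : (fun t => |α * (Real.exp ((t - u) / ε) * (1 / ε))| •
      f (u + ε * (Real.log (k t) - Real.log α))) =
      fun t => (α / ε * Real.exp (-u / ε)) * (f t * Real.exp (t / ε)) := by
    funext t
    rw [hlogk, abs_of_pos (by positivity), sub_div, sub_eq_add_neg, Real.exp_add, smul_eq_mul,
      neg_div]
    ring
  have c1 := integrableOn_image_iff_integrableOn_abs_deriv_smul measurableSet_Iic hkd hinj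
    (fun t => f (u + ε * (Real.log t - Real.log α)))
  have c2 := integral_image_eq_integral_abs_deriv_smul measurableSet_Iic hkd hinj
    (fun t => f (u + ε * (Real.log t - Real.log α)))
  rw [him] at c1 c2
  rw [hfun] at c1 c2
  refine ⟨c1.2 ((h.i0 u).const_mul _), ?_⟩
  rw [c2, integral_const_mul]
  have p := Good.parts h.hd0 u (h.i0 u) (h.i1 u)
  have ee : Real.exp (-u / ε) * Real.exp (u / ε) = 1 := by
    rw [← Real.exp_add]; ring_nf; simp
  have e3 : ε * ε⁻¹ = 1 := mul_inv_cancel₀ hε.ne'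
  unfold mR
  set I := ∫ t in Iic u, deriv f t * Real.exp (t / ε)
  linear_combination (α * Real.exp (-u / ε)) * p + α * f u * ee +
    α * Real.exp (-u / ε) * I * e3

lemma lower {ε : ℝ} {f : ℝ → ℝ} (h : Good ε f) {x₁ x₂ : ℝ} (hx1 : x₁ ^ 2 ≤ x₂)
    (hx2 : x₂ ≤ x₁ ^ 2 + ε ^ 2) :
    ∃ φ : ℝ → ℝ, memBMOe ε 0 1 φ ∧ IntegrableOn (fun t => f (φ t)) (Ioo 0 1) ∧
    intAvg φ 0 1 = x₁ ∧ intAvg (fun t => (φ t) ^ 2) 0 1 = x₂ ∧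
    BR ε f x₁ x₂ = intAvg (fun t => f (φ t)) 0 1 := by
  have hε := h.pos
  have hB : BR ε f x₁ x₂ = mR ε f (uRpt ε (x₁, x₂)) * (x₁ - uRpt ε (x₁, x₂)) +
    f (uRpt ε (x₁, x₂)) := rfl
  set u := uRpt ε (x₁, x₂) with hu
  set r := Real.sqrt (ε ^ 2 - (x₂ - x₁ ^ 2)) with hr
  have hr2 : r ^ 2 = ε ^ 2 - (x₂ - x₁ ^ 2) := Real.sq_sqrt (by linarith)
  have hr0 : 0 ≤ r := Real.sqrt_nonneg _
  have hrε : r ≤ ε := Real.sqrt_le_iff.2 ⟨hε.le, by linarith⟩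
  have hu' : u = x₁ + ε - r := rfl
  rcases hrε.lt_or_eq with hlt | heq
  · set α := (u - x₁) / ε with hα
    have hαε : α * ε = u - x₁ := div_mul_cancel₀ _ hε.ne'
    have h0 : 0 < α := div_pos (by linarith) hε
    have h1 : α ≤ 1 := (div_le_one hε).2 (by linarith)
    have il : IntegrableOn Real.log (Ioc 0 α) :=
      (intervalIntegrable_iff_integrableOn_Ioc_of_le h0.le).1 intervalIntegral.intervalIntegrable_log'
    have ls := logsq_aux le_rfl h0.le
    have il2 : IntegrableOn (fun t => Real.log t ^ 2) (Ioc 0 α) :=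
      (intervalIntegrable_iff_integrableOn_Ioc_of_le h0.le).1 ls.1
    have vl : ∫ t in Ioc 0 α, Real.log t = α * Real.log α - α := by
      rw [← intervalIntegral.integral_of_le h0.le, integral_log]; simp
    have vl2 : ∫ t in Ioc 0 α, Real.log t ^ 2 = α * Real.log α ^ 2 - 2 * (α * Real.log α) + 2 * α := by
      rw [← intervalIntegral.integral_of_le h0.le, ls.2]; simp
    set a := Real.log α with ha
    have f1 : (fun t => u + ε * (Real.log t - a)) = fun t => (u - ε * a) + ε * Real.log t := by
      funext t; ring
    have f2 : (fun t => (u + ε * (Real.log t - a)) ^ 2) = fun t =>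
        ((u - ε * a) ^ 2 + (2 * (u - ε * a) * ε) * Real.log t) + ε ^ 2 * Real.log t ^ 2 := by
      funext t; ring
    have cst : ∀ s : ℝ, IntegrableOn (fun _ : ℝ => s) (Ioc 0 α) := fun s =>
      integrableOn_const (by simp)
    obtain ⟨j1, v1⟩ := avg_opt (fun x => x) (ε := ε) (u := u) h0 h1 (by
      beta_reduce
      rw [← ha, f1]; exact (cst _).add (il.const_mul _))
    obtain ⟨j2, v2⟩ := avg_opt (fun x => x ^ 2) (ε := ε) (u := u) h0 h1 (by
      beta_reduce
      rw [← ha, f2]; exact ((cst _).add (il.const_mul _)).add (il2.const_mul _))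
    obtain ⟨j3, v3⟩ := avg_opt f (ε := ε) (u := u) h0 h1 (cov h h0).1
    have hvar : ∀ c d : ℝ, 0 ≤ c → c < d → d ≤ 1 →
        intAvg (fun t => (opt ε u α t) ^ 2) c d - (intAvg (opt ε u α) c d) ^ 2 ≤ ε ^ 2 := by
      intro c d hc hcd hd
      refine (var_le (L := ε ^ 2) (φ := Real.log) (a := intAvg Real.log c d)
        (b := u + ε * min 0 (intAvg Real.log c d - a)) hcd intervalIntegral.intervalIntegrable_log'
        (logsq_aux hc hcd.le).1 (ii_of_Ioo j1 hc hcd hd) (ii_of_Ioo j2 hc hcd hd) rfl ?_).trans ?_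
      · intro t _
        have : opt ε u α t - (u + ε * min 0 (intAvg Real.log c d - a)) =
            ε * (min 0 (Real.log t - a) - min 0 (intAvg Real.log c d - a)) := by
          unfold opt; ring
        rw [this, mul_pow]
        refine mul_le_mul_of_nonneg_left (sq_le_sq.2 ?_) (sq_nonneg _)
        refine (abs_min_sub_min_le_max _ _ _ _).trans ?_
        simp
      · have := mul_le_mul_of_nonneg_left (var_log hc hcd) (sq_nonneg ε)
        linarith
    refine ⟨opt ε u α, ⟨j1, j2, hvar⟩, j3, ?_, ?_, ?_⟩
    · refine v1.trans ?_
      beta_reduce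
      rw [← ha, f1, integral_add (cst _) (il.const_mul _), integral_const_mul, vl]
      simp [h0.le]
      linear_combination (-1) * hαε
    · refine v2.trans ?_
      beta_reduce
      have i12 : IntegrableOn (fun t => (u - ε * a) ^ 2 + (2 * (u - ε * a) * ε) * Real.log t)
        (Ioc 0 α) := (cst _).add (il.const_mul _)
      rw [← ha, f2, integral_add i12 (il2.const_mul _),
        integral_add (cst _) (il.const_mul _), integral_const_mul, integral_const_mul, vl, vl2]
      simp [h0.le]
      have : u = x₁ + ε - r := hu'
      have h5 : α * ε = ε - r := by rw [hαε, this]; ring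
      rw [this]
      linear_combination (2 * ε - 2 * (x₁ + ε - r)) * h5 - hr2
    · rw [v3, (cov h h0).2, hB]
      linear_combination (mR ε f u) * hαε
  · have hux : u = x₁ := by rw [hu', heq]; ring
    have hx2' : x₂ = x₁ ^ 2 := by rw [heq] at hr2; linarith
    refine ⟨fun _ => x₁, ⟨integrableOn_const (by simp), integrableOn_const (by simp), ?_⟩,
      integrableOn_const (by simp), ?_, ?_, ?_⟩
    · intro c d _ hcd _
      have := (sub_pos.2 hcd).ne'
      simp [intAvg]
      rw [mul_div_cancel_left₀ _ this, mul_div_cancel_left₀ _ this]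
      nlinarith
    · simp [intAvg]
    · simp [intAvg, hx2']
    · rw [hB, hux]; simp [intAvg]

lemma bellman_eq {ε : ℝ} {f : ℝ → ℝ} (h : Good ε f) {x : ℝ × ℝ} (hx : x ∈ parabStrip ε) :
    bellmanFn ε f x.1 x.2 = BR ε f x.1 x.2 := by
  obtain ⟨φ, hφ⟩ := lower h hx.1 hx.2
  refine IsGreatest.csSup_eq ⟨⟨φ, hφ⟩, ?_⟩
  rintro y ⟨φ, h1, h2, h3, h4, rfl⟩
  have := upper h h1 h2
  rwa [h3, h4] at this

open MeasureTheory Set Real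

lemma intOn_of_W {ε ε₀ : ℝ} (hε : 0 < ε) (hεε₀ : ε < ε₀) {F : ℝ → ℝ}
    (hF : Integrable (fun t => F t * Real.exp (-|t| / ε₀))) (u : ℝ) :
    IntegrableOn (fun t => F t * Real.exp (t / ε)) (Iic u) := by
  have h0 : 0 < ε₀ := hε.trans hεε₀
  have hEc : Continuous (fun t : ℝ => Real.exp (t / ε + |t| / ε₀)) := by fun_prop
  have hb : ∀ᵐ t ∂(volume.restrict (Iic u)),
      ‖Real.exp (t / ε + |t| / ε₀)‖ ≤ Real.exp (|u| / ε + |u| / ε₀) := by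
    refine (ae_restrict_iff' measurableSet_Iic).2 (Filter.Eventually.of_forall fun t ht => ?_)
    rw [Real.norm_eq_abs, abs_of_pos (Real.exp_pos _), Real.exp_le_exp]
    have ht : t ≤ u := ht
    rcases le_total t 0 with h | h
    · rw [abs_of_nonpos h]
      have h1 : -t / ε₀ ≤ -t / ε := div_le_div_of_nonneg_left (by linarith) hε hεε₀.le
      have h2 : t / ε + -t / ε = 0 := by ring
      have : 0 ≤ |u| / ε + |u| / ε₀ := by positivity
      linarith
    · have : |t| ≤ |u| := abs_le_abs_of_nonneg h ht
      have h3 : t ≤ |u| := ht.trans (le_abs_self u)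
      gcongr
  have := (hF.integrableOn (s := Iic u)).mul_bdd hEc.aestronglyMeasurable hb
  refine this.congr (Filter.Eventually.of_forall fun t => ?_)
  simp only
  rw [mul_assoc, ← Real.exp_add]
  congr 2
  ring

lemma good_of_W {ε ε₀ : ℝ} (hε : 0 < ε) (hεε₀ : ε < ε₀) {f f3 : ℝ → ℝ}
    (hf : memWcl ε₀ f f3) (hs : ∀ᵐ t : ℝ, f3 t < 0) : Good ε f := by
  obtain ⟨a, b, c, d, e, _⟩ := hf
  refine ⟨hε, a, intOn_of_W hε hεε₀ c, intOn_of_W hε hεε₀ d, intOn_of_W hε hεε₀ e, ?_⟩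
  intro x y hxy
  have h1 := b x y hxy
  rw [intervalIntegral.integral_of_le hxy] at h1
  have : ∫ t in Ioc x y, f3 t ≤ 0 :=
    integral_nonpos_of_ae (ae_restrict_of_ae (hs.mono fun t ht => ht.le))
  linarith

lemma W_refl {ε₀ : ℝ} {f f3 : ℝ → ℝ} (hf : memWcl ε₀ f f3) :
    (∀ t, deriv (fun t => f (-t)) t = - deriv f (-t)) ∧
    memWcl ε₀ (fun t => f (-t)) (fun t => - f3 (-t)) := by
  obtain ⟨a, b, c, d, e, g⟩ := hf
  have d1 : ∀ t, deriv (fun t => f (-t)) t = - deriv f (-t) := fun t => deriv_comp_neg f t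
  have d1' : deriv (fun t => f (-t)) = fun t => - deriv f (-t) := funext d1
  have d2 : ∀ t, deriv (deriv (fun t => f (-t))) t = deriv (deriv f) (-t) := by
    intro t
    rw [d1', deriv.fun_neg, deriv_comp_neg (deriv f) t, neg_neg]
  have key : ∀ F : ℝ → ℝ, Integrable (fun t => F t * Real.exp (-|t| / ε₀)) →
      Integrable (fun t => F (-t) * Real.exp (-|t| / ε₀)) := by
    intro F hF
    simpa using hF.comp_neg
  refine ⟨d1, a.comp contDiff_neg, ?_, key f c, ?_, ?_, ?_⟩
  · intro x y hxy
    rw [d2, d2, intervalIntegral.integral_neg, intervalIntegral.integral_comp_neg (fun t => f3 t),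
      ← b _ _ (neg_le_neg hxy)]
    ring
  · refine ((key _ d).neg).congr (Filter.Eventually.of_forall fun t => ?_)
    simp [d1]
  · refine (key _ e).congr (Filter.Eventually.of_forall fun t => ?_)
    simp only [d2]
  · refine ((key _ g).neg).congr (Filter.Eventually.of_forall fun t => ?_)
    simp

lemma intAvg_neg (φ : ℝ → ℝ) (c d : ℝ) : intAvg (fun t => - φ t) c d = - intAvg φ c d := by
  unfold intAvg
  rw [intervalIntegral.integral_neg, neg_div]

lemma bmo_neg {ε l r : ℝ} {φ : ℝ → ℝ} (h : memBMOe ε l r φ) : memBMOe ε l r (fun t => - φ t) := by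
  obtain ⟨a, b, c⟩ := h
  refine ⟨a.neg, by simpa using b, ?_⟩
  intro p q h1 h2 h3
  rw [intAvg_neg]
  simpa using c p q h1 h2 h3

lemma bell_refl (ε : ℝ) (f : ℝ → ℝ) (x₁ x₂ : ℝ) :
    bellmanFn ε (fun t => f (-t)) (-x₁) x₂ = bellmanFn ε f x₁ x₂ := by
  unfold bellmanFn
  congr 1
  ext y
  constructor
  · rintro ⟨φ, h1, h2, h3, h4, h5⟩
    refine ⟨fun t => - φ t, bmo_neg h1, h2, ?_, by simpa using h4, h5⟩
    rw [intAvg_neg, h3, neg_neg]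
  · rintro ⟨φ, h1, h2, h3, h4, h5⟩
    refine ⟨fun t => - φ t, bmo_neg h1, by simpa using h2, ?_, by simpa using h4, by simpa using h5⟩
    rw [intAvg_neg, h3]

theorem stmt11 (ε ε₀ : ℝ) (hε : 0 < ε) (hεε₀ : ε < ε₀) (f f3 : ℝ → ℝ)
    (hf : memWcl ε₀ f f3) :
    ((∀ᵐ t : ℝ, f3 t < 0) →
      ∀ x ∈ parabStrip ε,
        bellmanFn ε f x.1 x.2 =
          (ε⁻¹ * Real.exp (-(uRpt ε x) / ε) *
              ∫ t in Iic (uRpt ε x), deriv f t * Real.exp (t / ε)) *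
            (x.1 - uRpt ε x) + f (uRpt ε x)) ∧
    ((∀ᵐ t : ℝ, 0 < f3 t) →
      ∀ x ∈ parabStrip ε,
        bellmanFn ε f x.1 x.2 =
          (ε⁻¹ * Real.exp ((uLpt ε x) / ε) *
              ∫ t in Ici (uLpt ε x), deriv f t * Real.exp (-t / ε)) *
            (x.1 - uLpt ε x) + f (uLpt ε x)) := by
  refine ⟨fun hs x hx => bellman_eq (good_of_W hε hεε₀ hf hs) hx, fun hs x hx => ?_⟩
  obtain ⟨d1, hg⟩ := W_refl hf
  have hs' : ∀ᵐ t : ℝ, - f3 (-t) < 0 := by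
    have := (Measure.measurePreserving_neg (volume : Measure ℝ)).quasiMeasurePreserving.ae hs
    exact this.mono fun t ht => neg_lt_zero.2 ht
  have hG := good_of_W hε hεε₀ hg hs'
  have hx' : ((-x.1, x.2) : ℝ × ℝ) ∈ parabStrip ε := by
    simpa [parabStrip] using hx
  have hb := bellman_eq hG hx'
  have hu : uRpt ε (-x.1, x.2) = - uLpt ε x := by
    simp only [uRpt, uLpt, neg_sq]
    ring
  simp only [bell_refl, BR, mR, hu, neg_neg] at hb
  rw [hb]
  have hi : (∫ t in Iic (- uLpt ε x), deriv (fun t => f (-t)) t * Real.exp (t / ε)) =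
      - ∫ t in Ici (uLpt ε x), deriv f t * Real.exp (-t / ε) := by
    rw [integral_Ici_eq_integral_Ioi, ← integral_neg]
    have := integral_comp_neg_Iic (- uLpt ε x) (fun t => -(deriv f t * Real.exp (-t / ε)))
    rw [neg_neg] at this
    rw [← this]
    refine integral_congr_ae (Filter.Eventually.of_forall fun t => ?_)
    simp [d1]
  rw [hi]
  ring
end

section
/- Let ε > 0, let −∞ ≤ u₁ < v < u₂ ≤ +∞, and let f : ℝ → ℝ be twice continuously differentiable. Let m_R : (u₁, v] → ℝ and m_L : [v, u₂) → ℝ be twice differentiable with ε·m_R' + m_R = f' on (u₁,v], −ε·m_L' + m_L = f' on [v,u₂), m_R'' ≤ 0 on (u₁,v], and m_L'' ≥ 0 on [v,u₂). Set α₂ = (m_L(v) − m_R(v))/(4ε), α₁ = (m_R(v) + m_L(v))/2 − v·(m_L(v) − m_R(v))/(2ε), α₀ = v²·(m_L(v) − m_R(v))/(4ε) − v·(m_R(v) + m_L(v))/2 + f(v). Define B on Ω_{RL}(u₁,v,u₂) = {x ∈ Ω_ε : u₁ < u_R(x) and u_L(x) < u₂} by: B(x) = m_R(u_R(x))·(x₁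 − u_R(x)) + f(u_R(x)) if u_R(x) ≤ v; B(x) = α₁x₁ + α₂x₂ + α₀ if u_L(x) ≤ v ≤ u_R(x); B(x) = m_L(u_L(x))·(x₁ − u_L(x)) + f(u_L(x)) if v ≤ u_L(x). Then B is well defined (the formulas agree on the overlaps) and continuous, and B is locally concave on Ω_{RL}(u₁,v,u₂) if and only if m_R(v) + m_L(v) = 2f'(v), which is equivalent to m_R''(v) + m_L''(v) = 0. -/
open Set Real

/-- Local concavity on a subset of the plane. -/
def LocallyConcaveOn (Ω : Set (ℝ × ℝ)) (G : ℝ × ℝ → ℝ) : Prop :=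
  ∀ x y : ℝ × ℝ, x ∈ Ω → y ∈ Ω → segment ℝ x y ⊆ Ω →
    ∀ α β : ℝ, 0 ≤ α → 0 ≤ β → α + β = 1 →
      α * G x + β * G y ≤ G (α • x + β • y)

/-- The domain `Ω_{RL}(u₁,v,u₂)`. -/
def OmegaRL (ε : ℝ) (u₁ u₂ : EReal) : Set (ℝ × ℝ) :=
  {x | x ∈ parabStrip ε ∧ u₁ < (uRpt ε x : EReal) ∧ (uLpt ε x : EReal) < u₂}

/-- The linear function on the angle `Ω_ang(v)`. -/
noncomputable def Bang (ε : ℝ) (f mR mL : ℝ → ℝ) (v : ℝ) (x : ℝ × ℝ) : ℝ :=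
  ((mR v + mL v) / 2 - v * (mL v - mR v) / (2 * ε)) * x.1 +
    ((mL v - mR v) / (4 * ε)) * x.2 +
    (v ^ 2 * (mL v - mR v) / (4 * ε) - v * (mR v + mL v) / 2 + f v)

/-- The Bellman candidate `B^{RL}` glued from `B^R`, the angle, and `B^L`. -/
noncomputable def BRL (ε : ℝ) (f mR mL : ℝ → ℝ) (v : ℝ) (x : ℝ × ℝ) : ℝ :=
  if uRpt ε x ≤ v then mR (uRpt ε x) * (x.1 - uRpt ε x) + f (uRpt ε x)
  else if v ≤ uLpt ε x then mL (uLpt ε x) * (x.1 - uLpt ε x) + f (uLpt ε x)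
  else Bang ε f mR mL v x

noncomputable def ell (e s : ℝ) (y : ℝ × ℝ) : ℝ := y.2 - s ^ 2 - 2 * (s - e) * (y.1 - s)

noncomputable def TT (e : ℝ) (f m m' : ℝ → ℝ) (s : ℝ) (y : ℝ × ℝ) : ℝ :=
  f s + m s * (y.1 - s) + m' s / 2 * ell e s y

noncomputable def DD (ε : ℝ) (x : ℝ × ℝ) : ℝ := Real.sqrt (ε ^ 2 - (x.2 - x.1 ^ 2))

lemma uRpt_eq (ε : ℝ) (x : ℝ × ℝ) : uRpt ε x = x.1 + ε - DD ε x := rfl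

lemma uLpt_eq (ε : ℝ) (x : ℝ × ℝ) : uLpt ε x = x.1 - ε + DD ε x := rfl

lemma DD_nonneg (ε : ℝ) (x : ℝ × ℝ) : 0 ≤ DD ε x := Real.sqrt_nonneg _

lemma DD_sq {ε : ℝ} {x : ℝ × ℝ} (hx : x ∈ parabStrip ε) :
    DD ε x ^ 2 = ε ^ 2 - (x.2 - x.1 ^ 2) :=
  Real.sq_sqrt (by have := hx.2; linarith)

lemma DD_le {ε : ℝ} (hε : 0 < ε) {x : ℝ × ℝ} (hx : x ∈ parabStrip ε) : DD ε x ≤ ε := by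
  have h := DD_sq hx
  have := hx.1
  exact abs_le_of_sq_le_sq' (by linarith) hε.le |>.2

lemma uL_le {ε : ℝ} (hε : 0 < ε) {x : ℝ × ℝ} (hx : x ∈ parabStrip ε) : uLpt ε x ≤ x.1 := by
  rw [uLpt_eq]; linarith [DD_le hε hx]

lemma le_uR {ε : ℝ} (hε : 0 < ε) {x : ℝ × ℝ} (hx : x ∈ parabStrip ε) : x.1 ≤ uRpt ε x := by
  rw [uRpt_eq]; linarith [DD_le hε hx]

lemma ellR {ε : ℝ} {x : ℝ × ℝ} (hx : x ∈ parabStrip ε) (s : ℝ) :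
    ell ε s x = (uRpt ε x - s) * (uRpt ε x + 2 * DD ε x - s) := by
  have h := DD_sq hx
  rw [uRpt_eq, ell]; linear_combination h

lemma ellL {ε : ℝ} {x : ℝ × ℝ} (hx : x ∈ parabStrip ε) (s : ℝ) :
    ell (-ε) s x = (uLpt ε x - s) * (uLpt ε x - 2 * DD ε x - s) := by
  have h := DD_sq hx
  rw [uLpt_eq, ell]; linear_combination h

lemma TT_affine (e : ℝ) (f m m' : ℝ → ℝ) (s : ℝ) (x y : ℝ × ℝ) (α β : ℝ) (h : α + β = 1) :
    TT e f m m' s (α • x + β • y) = α * TT e f m m' s x + β * TT e f m m' s y := by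
  obtain rfl : β = 1 - α := by linarith
  simp only [TT, ell, Prod.fst_add, Prod.snd_add, Prod.smul_fst, Prod.smul_snd, smul_eq_mul]
  ring

lemma TT_deriv {e : ℝ} {f m m' : ℝ → ℝ} {s d : ℝ} (y : ℝ × ℝ)
    (hf : HasDerivAt f (e * m' s + m s) s) (hm : HasDerivAt m (m' s) s)
    (hm' : HasDerivAt m' d s) :
    HasDerivAt (fun s => TT e f m m' s y) (d / 2 * ell e s y) s := by
  have hi := hasDerivAt_id s
  have h1 := (hf.add (hm.mul (hi.const_sub y.1))).add
    ((hm'.div_const 2).mul (((hi.pow 2).const_sub y.2).sub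
      (((hi.sub_const e).const_mul 2).mul (hi.const_sub y.1))))
  refine h1.congr_deriv ?_
  simp [ell]
  ring

lemma TT_anti {e : ℝ} {f m m' m'' : ℝ → ℝ} {a b : ℝ} (hab : a ≤ b) (y : ℝ × ℝ)
    (h : ∀ s ∈ Icc a b, HasDerivAt f (e * m' s + m s) s ∧ HasDerivAt m (m' s) s ∧
      HasDerivAt m' (m'' s) s ∧ m'' s / 2 * ell e s y ≤ 0) :
    TT e f m m' b y ≤ TT e f m m' a y := by
  have hd : ∀ s ∈ Icc a b, HasDerivAt (fun s => TT e f m m' s y) (m'' s / 2 * ell e s y) s :=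
    fun s hs => TT_deriv y (h s hs).1 (h s hs).2.1 (h s hs).2.2.1
  refine antitoneOn_of_deriv_nonpos (convex_Icc a b)
    (fun s hs => (hd s hs).continuousAt.continuousWithinAt)
    (fun s hs => (hd s (interior_subset hs)).differentiableAt.differentiableWithinAt)
    (fun s hs => ?_) (left_mem_Icc.2 hab) (right_mem_Icc.2 hab) hab
  rw [(hd s (interior_subset hs)).deriv]
  exact (h s (interior_subset hs)).2.2.2

lemma TT_mono {e : ℝ} {f m m' m'' : ℝ → ℝ} {a b : ℝ} (hab : a ≤ b) (y : ℝ × ℝ)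
    (h : ∀ s ∈ Icc a b, HasDerivAt f (e * m' s + m s) s ∧ HasDerivAt m (m' s) s ∧
      HasDerivAt m' (m'' s) s ∧ 0 ≤ m'' s / 2 * ell e s y) :
    TT e f m m' a y ≤ TT e f m m' b y := by
  have hd : ∀ s ∈ Icc a b, HasDerivAt (fun s => TT e f m m' s y) (m'' s / 2 * ell e s y) s :=
    fun s hs => TT_deriv y (h s hs).1 (h s hs).2.1 (h s hs).2.2.1
  refine monotoneOn_of_deriv_nonneg (convex_Icc a b)
    (fun s hs => (hd s hs).continuousAt.continuousWithinAt)
    (fun s hs => (hd s (interior_subset hs)).differentiableAt.differentiableWithinAt)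
    (fun s hs => ?_) (left_mem_Icc.2 hab) (right_mem_Icc.2 hab) hab
  rw [(hd s (interior_subset hs)).deriv]
  exact (h s (interior_subset hs)).2.2.2

/-- Visibility obstruction. -/
lemma visible {ε e c : ℝ} (he : e ^ 2 = ε ^ 2) {x y : ℝ × ℝ}
    (hseg : segment ℝ x y ⊆ parabStrip ε)
    (hx : 0 ≤ ell e c x) (hy : 0 < ell e c y)
    (hxy : (x.1 - (c - e)) * (y.1 - (c - e)) ≤ 0) (hy0 : y.1 - (c - e) ≠ 0) : False := by
  have key : ∀ t : ℝ, 0 ≤ t → t ≤ 1 → (1 - t) * ell e c x + t * ell e c y ≤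
      ((1 - t) * (x.1 - (c - e)) + t * (y.1 - (c - e))) ^ 2 := by
    intro t h0 h1
    have hz : (1 - t) • x + t • y ∈ parabStrip ε :=
      hseg ⟨1 - t, t, by linarith, h0, by ring, rfl⟩
    have h2 := hz.2
    simp only [Prod.fst_add, Prod.snd_add, Prod.smul_fst, Prod.smul_snd, smul_eq_mul] at h2
    simp only [ell]
    nlinarith [h2]
  set p := x.1 - (c - e)
  set q := y.1 - (c - e)
  by_cases hp : p = 0
  · have hq : 0 < q ^ 2 := by positivity
    set L := ell e c y
    set t := min 1 (L / (2 * q ^ 2)) with ht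
    have ht0 : 0 < t := lt_min one_pos (by positivity)
    have ht1 : t ≤ 1 := min_le_left _ _
    have ht2 : t * (2 * q ^ 2) ≤ L := by
      have := min_le_right 1 (L / (2 * q ^ 2))
      rwa [← ht, le_div_iff₀ (by positivity)] at this
    have := key t ht0.le ht1
    rw [hp] at this
    have h3 : t * L ≤ t * (t * q ^ 2) := by nlinarith [mul_nonneg (sub_nonneg.2 ht1) hx]
    have h4 := le_of_mul_le_mul_left h3 ht0
    nlinarith
  · have hpq : p * q < 0 := lt_of_le_of_ne hxy (mul_ne_zero hp hy0)
    have hne : p - q ≠ 0 := by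
      intro h
      have : p = q := by linarith
      rw [this] at hpq; nlinarith [sq_nonneg q]
    have hd : 0 < (p - q) ^ 2 := by positivity
    -- t = p/(p-q) = p(p-q)/(p-q)^2
    have ht0 : 0 < p / (p - q) := by
      have : p / (p - q) = p * (p - q) / (p - q) ^ 2 := by field_simp
      rw [this]; apply div_pos _ hd; nlinarith [sq_nonneg p]
    have ht1 : p / (p - q) ≤ 1 := by
      have : 1 - p / (p - q) = -q * (p - q) / (p - q) ^ 2 := by field_simp; ring
      have h2 : 0 ≤ -q * (p - q) / (p - q) ^ 2 := div_nonneg (by nlinarith [sq_nonneg q]) hd.le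
      linarith
    have := key _ ht0.le ht1
    have h0 : (1 - p / (p - q)) * p + p / (p - q) * q = 0 := by field_simp; ring
    rw [h0] at this
    nlinarith [mul_nonneg (sub_nonneg.2 ht1) hx, mul_pos ht0 hy]

def HypR (ε : ℝ) (u₁ : EReal) (v : ℝ) (f m m' m'' : ℝ → ℝ) : Prop :=
  ∀ s : ℝ, u₁ < (s : EReal) → s ≤ v → HasDerivAt f (ε * m' s + m s) s ∧ HasDerivAt m (m' s) s ∧
      HasDerivAt m' (m'' s) s ∧ m'' s ≤ 0

def HypL (ε : ℝ) (u₂ : EReal) (v : ℝ) (f m m' m'' : ℝ → ℝ) : Prop :=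
  ∀ s : ℝ, v ≤ s → (s : EReal) < u₂ → HasDerivAt f (-ε * m' s + m s) s ∧
    HasDerivAt m (m' s) s ∧ HasDerivAt m' (m'' s) s ∧ 0 ≤ m'' s

lemma lt_of_lt_coe {u : EReal} {a b : ℝ} (h : u < (a : EReal)) (hab : a ≤ b) : u < (b : EReal) :=
  h.trans_le (EReal.coe_le_coe_iff.2 hab)

lemma coe_lt_of_lt {u : EReal} {a b : ℝ} (h : (b : EReal) < u) (hab : a ≤ b) : (a : EReal) < u :=
  (EReal.coe_le_coe_iff.2 hab).trans_lt h

lemma Rshift {ε : ℝ} {u₁ : EReal} {v : ℝ} {f m m' m'' : ℝ → ℝ} (H : HypR ε u₁ v f m m' m'')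
    {c b : ℝ} (hc : u₁ < (c : EReal)) (hcb : c ≤ b) (hbv : b ≤ v) {y : ℝ × ℝ}
    (hy : y ∈ parabStrip ε) (hyv : b ≤ uRpt ε y) : TT ε f m m' b y ≤ TT ε f m m' c y := by
  apply TT_anti (m'' := m'') hcb
  intro s hs
  obtain ⟨h1, h2, h3, h4⟩ := H s (lt_of_lt_coe hc hs.1) (hs.2.trans hbv)
  refine ⟨h1, h2, h3, ?_⟩
  rw [ellR hy]
  refine mul_nonpos_of_nonpos_of_nonneg (by linarith) (mul_nonneg ?_ ?_) <;>
    linarith [hs.2, DD_nonneg ε y]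

lemma Lshift {ε : ℝ} {u₂ : EReal} {v : ℝ} {f m m' m'' : ℝ → ℝ} (H : HypL ε u₂ v f m m' m'')
    {c b : ℝ} (hc : (c : EReal) < u₂) (hcb : b ≤ c) (hbv : v ≤ b) {y : ℝ × ℝ}
    (hy : y ∈ parabStrip ε) (hyv : uLpt ε y ≤ b) : TT (-ε) f m m' b y ≤ TT (-ε) f m m' c y := by
  apply TT_mono (m'' := m'') hcb
  intro s hs
  obtain ⟨h1, h2, h3, h4⟩ := H s (hbv.trans hs.1) (coe_lt_of_lt hc hs.2)
  refine ⟨h1, h2, h3, ?_⟩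
  rw [ellL hy]
  refine mul_nonneg (by linarith) (mul_nonneg_of_nonpos_of_nonpos ?_ ?_) <;>
    linarith [hs.1, DD_nonneg ε y]

lemma Rstep {ε : ℝ} {u₁ : EReal} {v : ℝ} {f m m' m'' : ℝ → ℝ} (H : HypR ε u₁ v f m m' m'')
    {c : ℝ} (hc : u₁ < (c : EReal)) (hcv : c ≤ v) {z y : ℝ × ℝ}
    (hz : z ∈ parabStrip ε) (hy : y ∈ parabStrip ε) (hseg : segment ℝ z y ⊆ parabStrip ε)
    (hzc : c ≤ uRpt ε z) (hyu : u₁ < (uRpt ε y : EReal)) (hyv : uRpt ε y ≤ v) :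
    TT ε f m m' (uRpt ε y) y ≤ TT ε f m m' c y := by
  rcases le_total c (uRpt ε y) with h | h
  · exact Rshift H hc h hyv hy le_rfl
  · have hvis : c ≤ uRpt ε y + 2 * DD ε y := by
      by_contra! hcon
      have hD := DD_nonneg ε y
      have hDz := DD_nonneg ε z
      have h1 : y.1 - (c - ε) < 0 := by rw [uRpt_eq] at hcon; linarith
      refine visible (e := ε) (c := c) rfl hseg ?_ ?_ ?_ h1.ne
      · rw [ellR hz]; exact mul_nonneg (by linarith) (by linarith)
      · rw [ellR hy]; exact mul_pos_of_neg_of_neg (by linarith) (by linarith)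
      · refine mul_nonpos_of_nonneg_of_nonpos ?_ h1.le
        rw [uRpt_eq] at hzc; linarith
    apply TT_mono (m'' := m'') h
    intro s hs
    obtain ⟨h1, h2, h3, h4⟩ := H s (lt_of_lt_coe hyu hs.1) (hs.2.trans hcv)
    refine ⟨h1, h2, h3, ?_⟩
    rw [ellR hy]
    exact mul_nonneg_of_nonpos_of_nonpos (by linarith)
      (mul_nonpos_of_nonpos_of_nonneg (by linarith [hs.1]) (by linarith [hs.2]))

lemma Lstep {ε : ℝ} {u₂ : EReal} {v : ℝ} {f m m' m'' : ℝ → ℝ} (H : HypL ε u₂ v f m m' m'')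
    {c : ℝ} (hc : (c : EReal) < u₂) (hcv : v ≤ c) {z y : ℝ × ℝ}
    (hz : z ∈ parabStrip ε) (hy : y ∈ parabStrip ε) (hseg : segment ℝ z y ⊆ parabStrip ε)
    (hzc : uLpt ε z ≤ c) (hyu : (uLpt ε y : EReal) < u₂) (hyv : v ≤ uLpt ε y) :
    TT (-ε) f m m' (uLpt ε y) y ≤ TT (-ε) f m m' c y := by
  rcases le_total (uLpt ε y) c with h | h
  · exact Lshift H hc h hyv hy le_rfl
  · have hvis : uLpt ε y - 2 * DD ε y ≤ c := by
      by_contra! hcon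
      have hD := DD_nonneg ε y
      have hDz := DD_nonneg ε z
      have h1 : 0 < y.1 - (c - -ε) := by rw [uLpt_eq] at hcon; linarith
      refine visible (e := -ε) (c := c) (by ring) hseg ?_ ?_ ?_ h1.ne'
      · rw [ellL hz]; exact mul_nonneg_of_nonpos_of_nonpos (by linarith) (by linarith)
      · rw [ellL hy]; exact mul_pos (by linarith) (by linarith)
      · refine mul_nonpos_of_nonpos_of_nonneg ?_ h1.le
        rw [uLpt_eq] at hzc; linarith
    apply TT_anti (m'' := m'') h
    intro s hs
    obtain ⟨h1, h2, h3, h4⟩ := H s (hcv.trans hs.1) (coe_lt_of_lt hyu hs.2)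
    refine ⟨h1, h2, h3, ?_⟩
    rw [ellL hy]
    exact mul_nonpos_of_nonneg_of_nonpos (by linarith)
      (mul_nonpos_of_nonneg_of_nonpos (by linarith [hs.2]) (by linarith [hs.1]))

lemma BR_eq {ε : ℝ} (f m m' : ℝ → ℝ) {x : ℝ × ℝ} (hx : x ∈ parabStrip ε) :
    m (uRpt ε x) * (x.1 - uRpt ε x) + f (uRpt ε x) = TT ε f m m' (uRpt ε x) x := by
  rw [TT, ellR hx]; ring

lemma BL_eq {ε : ℝ} (f m m' : ℝ → ℝ) {x : ℝ × ℝ} (hx : x ∈ parabStrip ε) :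
    m (uLpt ε x) * (x.1 - uLpt ε x) + f (uLpt ε x) = TT (-ε) f m m' (uLpt ε x) x := by
  rw [TT, ellL hx]; ring

lemma glueR {ε : ℝ} (hε : 0 < ε) (f mR mL : ℝ → ℝ) {v : ℝ} {x : ℝ × ℝ} (hx : x ∈ parabStrip ε)
    (h : uRpt ε x = v) :
    mR (uRpt ε x) * (x.1 - uRpt ε x) + f (uRpt ε x) = Bang ε f mR mL v x := by
  have h0 := ellR hx v
  rw [h, sub_self, zero_mul, ell] at h0
  have h2 : x.2 = v ^ 2 + 2 * (v - ε) * (x.1 - v) := by linarith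
  rw [h, Bang, h2]; field_simp; ring

lemma glueL {ε : ℝ} (hε : 0 < ε) (f mR mL : ℝ → ℝ) {v : ℝ} {x : ℝ × ℝ} (hx : x ∈ parabStrip ε)
    (h : uLpt ε x = v) :
    mL (uLpt ε x) * (x.1 - uLpt ε x) + f (uLpt ε x) = Bang ε f mR mL v x := by
  have h0 := ellL hx v
  rw [h, sub_self, zero_mul, ell] at h0
  have h2 : x.2 = v ^ 2 + 2 * (v + ε) * (x.1 - v) := by linarith
  rw [h, Bang, h2]; field_simp; ring

lemma continuous_uR (ε : ℝ) : Continuous (uRpt ε) := by unfold uRpt; fun_prop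

lemma continuous_uL (ε : ℝ) : Continuous (uLpt ε) := by unfold uLpt; fun_prop

lemma contBRL {ε : ℝ} (hε : 0 < ε) {u₁ u₂ : EReal} {v : ℝ}
    {f mR mR' mR'' mL mL' mL'' : ℝ → ℝ} (hf : Continuous f)
    (HR : HypR ε u₁ v f mR mR' mR'') (HL : HypL ε u₂ v f mL mL' mL'') :
    ContinuousOn (BRL ε f mR mL v) (OmegaRL ε u₁ u₂) := by
  have cR := continuous_uR ε
  have cL := continuous_uL ε
  unfold BRL
  apply ContinuousOn.if
  · rintro x ⟨hx, hx2⟩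
    have h : uRpt ε x = v := frontier_le_subset_eq cR continuous_const hx2
    rw [glueR hε f mR mL hx.1 h]
    split_ifs with h3
    · refine (glueL hε f mR mL hx.1 (le_antisymm ?_ h3)).symm
      linarith [uL_le hε hx.1, le_uR hε hx.1]
    · rfl
  · rw [(isClosed_le cR continuous_const).closure_eq]
    rintro x ⟨hx, hxv⟩
    have := (HR _ hx.2.1 hxv).2.1.continuousAt
    have h2 : ContinuousAt (fun x => mR (uRpt ε x)) x := ContinuousAt.comp this cR.continuousAt
    exact ((h2.mul (by fun_prop)).add (by fun_prop)).continuousWithinAt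
  · apply ContinuousOn.if
    · rintro x ⟨⟨hx, -⟩, hx2⟩
      have h : v = uLpt ε x := frontier_le_subset_eq continuous_const cL hx2
      exact glueL hε f mR mL hx.1 h.symm
    · rw [(isClosed_le continuous_const cL).closure_eq]
      rintro x ⟨⟨hx, -⟩, hxv⟩
      have := (HL _ hxv hx.2.2).2.1.continuousAt
      have h2 : ContinuousAt (fun x => mL (uLpt ε x)) x := ContinuousAt.comp this cL.continuousAt
      exact ((h2.mul (by fun_prop)).add (by fun_prop)).continuousWithinAt
    · unfold Bang; fun_prop

lemma BangR {ε : ℝ} (hε : 0 < ε) (f mR mL mR' : ℝ → ℝ) {v : ℝ}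
    (h : mL v - mR v = 2 * ε * mR' v) (x : ℝ × ℝ) :
    Bang ε f mR mL v x = TT ε f mR mR' v x := by
  have : mL v = mR v + 2 * ε * mR' v := by linarith
  rw [Bang, TT, ell, this]; field_simp; ring

lemma BangL {ε : ℝ} (hε : 0 < ε) (f mR mL mL' : ℝ → ℝ) {v : ℝ}
    (h : mL v - mR v = 2 * ε * mL' v) (x : ℝ × ℝ) :
    Bang ε f mR mL v x = TT (-ε) f mL mL' v x := by
  have : mL v = mR v + 2 * ε * mL' v := by linarith
  rw [Bang, TT, ell, this]; field_simp; ring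

lemma support {ε : ℝ} (hε : 0 < ε) {u₁ u₂ : EReal} {v : ℝ}
    (hu₁ : u₁ < (v : EReal)) (hu₂ : (v : EReal) < u₂)
    {f mR mR' mR'' mL mL' mL'' : ℝ → ℝ}
    (HR : HypR ε u₁ v f mR mR' mR'') (HL : HypL ε u₂ v f mL mL' mL'')
    (h1 : mL v - mR v = 2 * ε * mR' v) (h2 : mL v - mR v = 2 * ε * mL' v)
    {z : ℝ × ℝ} (hz : z ∈ OmegaRL ε u₁ u₂) :
    ∃ (e s : ℝ) (m m' : ℝ → ℝ), BRL ε f mR mL v z = TT e f m m' s z ∧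
      ∀ y ∈ OmegaRL ε u₁ u₂, segment ℝ z y ⊆ parabStrip ε →
        BRL ε f mR mL v y ≤ TT e f m m' s y := by
  have hRL : ∀ x, TT ε f mR mR' v x = TT (-ε) f mL mL' v x := fun x => by
    rw [← BangR hε f mR mL mR' h1, BangL hε f mR mL mL' h2]
  have zz1 := uL_le hε hz.1
  have zz2 := le_uR hε hz.1
  by_cases hzR : uRpt ε z ≤ v
  · refine ⟨ε, uRpt ε z, mR, mR', ?_, fun y hy hseg => ?_⟩
    · rw [BRL, if_pos hzR, BR_eq f mR mR' hz.1]
    · unfold BRL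
      split_ifs with a b
      · rw [BR_eq f mR mR' hy.1]
        exact Rstep HR hz.2.1 hzR hz.1 hy.1 hseg le_rfl hy.2.1 a
      · rw [BL_eq f mL mL' hy.1]
        refine (Lstep HL hu₂ le_rfl hz.1 hy.1 hseg (by linarith) hy.2.2 b).trans ?_
        rw [← hRL]
        exact Rshift HR hz.2.1 hzR le_rfl hy.1 (not_le.1 a).le
      · rw [BangR hε f mR mL mR' h1]
        exact Rshift HR hz.2.1 hzR le_rfl hy.1 (not_le.1 a).le
  have hzR' := (not_le.1 hzR).le
  by_cases hzL : v ≤ uLpt ε z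
  · refine ⟨-ε, uLpt ε z, mL, mL', ?_, fun y hy hseg => ?_⟩
    · rw [BRL, if_neg hzR, if_pos hzL, BL_eq f mL mL' hz.1]
    · have yy1 := uL_le hε hy.1
      have yy2 := le_uR hε hy.1
      unfold BRL
      split_ifs with a b
      · rw [BR_eq f mR mR' hy.1]
        refine (Rstep HR hu₁ le_rfl hz.1 hy.1 hseg hzR' hy.2.1 a).trans ?_
        rw [hRL]
        exact Lshift HL hz.2.2 hzL le_rfl hy.1 (by linarith)
      · rw [BL_eq f mL mL' hy.1]
        exact Lstep HL hz.2.2 hzL hz.1 hy.1 hseg le_rfl hy.2.2 b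
      · rw [BangL hε f mR mL mL' h2]
        exact Lshift HL hz.2.2 hzL le_rfl hy.1 (not_le.1 b).le
  · refine ⟨ε, v, mR, mR', ?_, fun y hy hseg => ?_⟩
    · rw [BRL, if_neg hzR, if_neg hzL, BangR hε f mR mL mR' h1]
    · unfold BRL
      split_ifs with a b
      · rw [BR_eq f mR mR' hy.1]
        exact Rstep HR hu₁ le_rfl hz.1 hy.1 hseg hzR' hy.2.1 a
      · rw [BL_eq f mL mL' hy.1, hRL]
        exact Lstep HL hu₂ le_rfl hz.1 hy.1 hseg (not_le.1 hzL).le hy.2.2 b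
      · rw [BangR hε f mR mL mR' h1]

lemma concave_of {ε : ℝ} (hε : 0 < ε) {u₁ u₂ : EReal} {v : ℝ}
    (hu₁ : u₁ < (v : EReal)) (hu₂ : (v : EReal) < u₂)
    {f mR mR' mR'' mL mL' mL'' : ℝ → ℝ}
    (HR : HypR ε u₁ v f mR mR' mR'') (HL : HypL ε u₂ v f mL mL' mL'')
    (h1 : mL v - mR v = 2 * ε * mR' v) (h2 : mL v - mR v = 2 * ε * mL' v) :
    LocallyConcaveOn (OmegaRL ε u₁ u₂) (BRL ε f mR mL v) := by
  intro x y hx hy hseg α β hα hβ hab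
  have hzs : α • x + β • y ∈ segment ℝ x y := ⟨α, β, hα, hβ, hab, rfl⟩
  have hz := hseg hzs
  obtain ⟨e, s, m, m', hzT, hT⟩ := support hε hu₁ hu₂ HR HL h1 h2 hz
  have hsub : segment ℝ x y ⊆ parabStrip ε := fun w hw => (hseg hw).1
  have hX := hT x hx (((convex_segment x y).segment_subset hzs (left_mem_segment ℝ x y)).trans hsub)
  have hY := hT y hy (((convex_segment x y).segment_subset hzs (right_mem_segment ℝ x y)).trans hsub)
  rw [hzT, TT_affine _ _ _ _ _ _ _ _ _ hab]
  exact add_le_add (mul_le_mul_of_nonneg_left hX hα) (mul_le_mul_of_nonneg_left hY hβ)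

/-- Concavity across a kink. -/
lemma kink {φ : ℝ → ℝ} {d a : ℝ} (h : HasDerivAt φ d 0)
    (hk : ∀ᶠ t in nhdsWithin (0 : ℝ) (Iio 0), φ t ≤ φ 0 + a * t) : a ≤ d := by
  have h1 := (hasDerivAt_iff_tendsto_slope.1 h).mono_left
    (nhdsWithin_mono (0 : ℝ) (show Iio (0 : ℝ) ⊆ {0}ᶜ from fun t ht => ne_of_lt ht))
  refine ge_of_tendsto h1 ?_
  filter_upwards [hk, self_mem_nhdsWithin] with t ht ht0
  have ht0 : t < 0 := ht0
  rw [slope_def_field, le_div_iff_of_neg (by linarith)]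
  linarith

lemma vert_segment {a b c : ℝ} (hbc : b ≤ c) : ∀ w ∈ segment ℝ ((a, b) : ℝ × ℝ) (a, c),
    w.1 = a ∧ b ≤ w.2 ∧ w.2 ≤ c := by
  rintro w ⟨α, β, hα, hβ, hab, rfl⟩
  obtain rfl : α = 1 - β := by linarith
  simp only [Prod.fst_add, Prod.snd_add, Prod.smul_fst, Prod.smul_snd, smul_eq_mul]
  refine ⟨by ring, ?_, ?_⟩ <;> nlinarith

lemma sqrt_half {ε : ℝ} (hε : 0 < ε) : Real.sqrt (ε ^ 2 - (3 / 4 * ε ^ 2)) = ε / 2 := by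
  rw [show ε ^ 2 - (3 / 4 * ε ^ 2) = (ε / 2) ^ 2 by ring, Real.sqrt_sq (by linarith)]

lemma sqrt_deriv {ε : ℝ} (hε : 0 < ε) :
    HasDerivAt (fun t => Real.sqrt (ε ^ 2 - (3 / 4 * ε ^ 2 + t))) (-(1 / ε)) 0 := by
  have h := (((hasDerivAt_id (0 : ℝ)).const_add (3 / 4 * ε ^ 2)).const_sub (ε ^ 2)).sqrt
    (by simp; nlinarith [sq_pos_of_pos hε])
  refine h.congr_deriv ?_
  simp only [id, add_zero]
  rw [sqrt_half hε]; field_simp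

lemma necR {ε : ℝ} (hε : 0 < ε) {u₁ u₂ : EReal} {v : ℝ}
    (hu₁ : u₁ < (v : EReal)) (hu₂ : (v : EReal) < u₂)
    {f mR mR' mR'' mL : ℝ → ℝ}
    (HR : HypR ε u₁ v f mR mR' mR'')
    (hc : LocallyConcaveOn (OmegaRL ε u₁ u₂) (BRL ε f mR mL v)) :
    (mL v - mR v) / (4 * ε) ≤ mR' v / 2 := by
  set a := v - ε / 2 with ha
  set P : ℝ → ℝ × ℝ := fun t => (a, a ^ 2 + (3 / 4 * ε ^ 2 + t)) with hP
  set S : ℝ → ℝ := fun t => Real.sqrt (ε ^ 2 - (3 / 4 * ε ^ 2 + t)) with hS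
  have hS0 : S 0 = ε / 2 := by simp only [hS, add_zero]; exact sqrt_half hε
  have hSanti : ∀ s t, s ≤ t → S t ≤ S s := fun s t h => Real.sqrt_le_sqrt (by linarith)
  have hSd : HasDerivAt S (-(1 / ε)) 0 := sqrt_deriv hε
  have hU : ∀ t, uRpt ε (P t) = a + ε - S t := fun t => by
    simp only [uRpt, hP, hS]; congr 3; ring
  have hL : ∀ t, uLpt ε (P t) = a - ε + S t := fun t => by
    simp only [uLpt, hP, hS]; congr 3; ring
  set φ : ℝ → ℝ := fun t => mR (a + ε - S t) * (a - (a + ε - S t)) + f (a + ε - S t) with hφ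
  have hv0 : a + ε - S 0 = v := by rw [hS0, ha]; ring
  obtain ⟨h1, h2, h3, -⟩ := HR v hu₁ le_rfl
  have hUd : HasDerivAt (fun t => a + ε - S t) (1 / ε) 0 := by
    simpa using hSd.const_sub (a + ε)
  have hd : HasDerivAt φ (mR' v / 2) 0 := by
    have e1 : HasDerivAt (fun t => mR (a + ε - S t)) (mR' v * (1 / ε)) 0 :=
      HasDerivAt.comp (0 : ℝ) (by rw [hv0]; exact h2) hUd
    have e2 : HasDerivAt (fun t => f (a + ε - S t)) ((ε * mR' v + mR v) * (1 / ε)) 0 :=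
      HasDerivAt.comp (0 : ℝ) (by rw [hv0]; exact h1) hUd
    refine ((e1.mul (hUd.const_sub a)).add e2).congr_deriv ?_
    rw [hv0, ha]; field_simp; ring
  refine kink hd ?_
  have hev : ∀ᶠ t in nhdsWithin (0 : ℝ) (Iio 0), u₁ < ((a + ε - S t : ℝ) : EReal) := by
    have c1 : ContinuousAt (fun t => ((a + ε - S t : ℝ) : EReal)) 0 :=
      continuous_coe_real_ereal.continuousAt.comp hUd.continuousAt
    exact (c1.eventually (lt_mem_nhds (by beta_reduce; rw [hv0]; exact hu₁))).filter_mono nhdsWithin_le_nhds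
  have hev2 : ∀ᶠ t in nhdsWithin (0 : ℝ) (Iio 0), -(ε ^ 2 / 4) < t :=
    (lt_mem_nhds (by have := sq_pos_of_pos hε; linarith)).filter_mono nhdsWithin_le_nhds
  filter_upwards [hev, hev2, self_mem_nhdsWithin] with t ht1 ht2 ht0
  have ht0 : t < 0 := ht0
  have hε2 := sq_pos_of_pos hε
  have hmem : ∀ s, t ≤ s → s ≤ -t → P s ∈ OmegaRL ε u₁ u₂ := by
    intro s hs1 hs2
    have hst : P s ∈ parabStrip ε := by
      constructor <;> simp only [hP] <;> linarith
    refine ⟨hst, ?_, ?_⟩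
    · rw [hU]; exact lt_of_lt_coe ht1 (by linarith [hSanti _ _ hs1])
    · refine coe_lt_of_lt hu₂ ((uL_le hε hst).trans ?_)
      simp only [hP, ha]; linarith
  have hkey := hc (P t) (P (-t)) (hmem t le_rfl (by linarith)) (hmem (-t) (by linarith) le_rfl)
    (by
      intro w hw
      obtain ⟨w1, w2, w3⟩ := vert_segment (by linarith) w hw
      have : w = P (w.2 - a ^ 2 - 3 / 4 * ε ^ 2) := by
        ext
        · exact w1
        · simp only [hP]; ring
      rw [this]
      exact hmem _ (by linarith) (by linarith))
    (1 / 2) (1 / 2) (by norm_num) (by norm_num) (by norm_num)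
  have hmid : (1 / 2 : ℝ) • P t + (1 / 2 : ℝ) • P (-t) = P 0 := by
    ext <;> simp [hP] <;> ring
  rw [hmid] at hkey
  have b1 : BRL ε f mR mL v (P t) = φ t := by
    rw [BRL, if_pos, hU]
    rw [hU]; linarith [hSanti _ _ ht0.le]
  have b0 : BRL ε f mR mL v (P 0) = φ 0 := by
    rw [BRL, if_pos, hU]
    rw [hU, hv0]
  have b2 : BRL ε f mR mL v (P (-t)) = Bang ε f mR mL v (P (-t)) := by
    rw [BRL, if_neg, if_neg]
    · have hst := (hmem (-t) (by linarith) le_rfl).1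
      have h5 := uL_le hε hst
      have : (P (-t)).1 < v := by simp only [hP, ha]; linarith
      linarith
    · rw [hU, not_le]
      have : S (-t) < S 0 := Real.sqrt_lt_sqrt (by linarith) (by linarith)
      linarith
  have b3 : φ 0 = Bang ε f mR mL v (P 0) := by
    rw [← glueR hε f mR mL (hmem 0 (by linarith) (by linarith)).1 (by rw [hU, hv0]), hU]
  have b4 : Bang ε f mR mL v (P (-t)) = Bang ε f mR mL v (P 0) - (mL v - mR v) / (4 * ε) * t := by
    simp only [Bang, hP]; ring
  rw [b1, b0, b2, b4, ← b3] at hkey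
  linarith

lemma necL {ε : ℝ} (hε : 0 < ε) {u₁ u₂ : EReal} {v : ℝ}
    (hu₁ : u₁ < (v : EReal)) (hu₂ : (v : EReal) < u₂)
    {f mR mL mL' mL'' : ℝ → ℝ}
    (HL : HypL ε u₂ v f mL mL' mL'')
    (hc : LocallyConcaveOn (OmegaRL ε u₁ u₂) (BRL ε f mR mL v)) :
    (mL v - mR v) / (4 * ε) ≤ mL' v / 2 := by
  set a := v + ε / 2 with ha
  set P : ℝ → ℝ × ℝ := fun t => (a, a ^ 2 + (3 / 4 * ε ^ 2 + t)) with hP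
  set S : ℝ → ℝ := fun t => Real.sqrt (ε ^ 2 - (3 / 4 * ε ^ 2 + t)) with hS
  have hS0 : S 0 = ε / 2 := by simp only [hS, add_zero]; exact sqrt_half hε
  have hSanti : ∀ s t, s ≤ t → S t ≤ S s := fun s t h => Real.sqrt_le_sqrt (by linarith)
  have hSd : HasDerivAt S (-(1 / ε)) 0 := sqrt_deriv hε
  have hL : ∀ t, uLpt ε (P t) = a - ε + S t := fun t => by
    simp only [uLpt, hP, hS]; congr 3; ring
  set φ : ℝ → ℝ := fun t => mL (a - ε + S t) * (a - (a - ε + S t)) + f (a - ε + S t) with hφ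
  have hv0 : a - ε + S 0 = v := by rw [hS0, ha]; ring
  obtain ⟨h1, h2, h3, -⟩ := HL v le_rfl hu₂
  have hUd : HasDerivAt (fun t => a - ε + S t) (-(1 / ε)) 0 := by
    simpa using hSd.const_add (a - ε)
  have hd : HasDerivAt φ (mL' v / 2) 0 := by
    have e1 : HasDerivAt (fun t => mL (a - ε + S t)) (mL' v * (-(1 / ε))) 0 :=
      HasDerivAt.comp (0 : ℝ) (by rw [hv0]; exact h2) hUd
    have e2 : HasDerivAt (fun t => f (a - ε + S t)) ((-ε * mL' v + mL v) * (-(1 / ε))) 0 :=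
      HasDerivAt.comp (0 : ℝ) (by rw [hv0]; exact h1) hUd
    refine ((e1.mul (hUd.const_sub a)).add e2).congr_deriv ?_
    rw [hv0, ha]; field_simp; ring
  refine kink hd ?_
  have hev : ∀ᶠ t in nhdsWithin (0 : ℝ) (Iio 0), ((a - ε + S t : ℝ) : EReal) < u₂ := by
    have c1 : ContinuousAt (fun t => ((a - ε + S t : ℝ) : EReal)) 0 :=
      continuous_coe_real_ereal.continuousAt.comp hUd.continuousAt
    exact (c1.eventually (gt_mem_nhds (by beta_reduce; rw [hv0]; exact hu₂))).filter_mono nhdsWithin_le_nhds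
  have hev2 : ∀ᶠ t in nhdsWithin (0 : ℝ) (Iio 0), -(ε ^ 2 / 4) < t :=
    (lt_mem_nhds (by have := sq_pos_of_pos hε; linarith)).filter_mono nhdsWithin_le_nhds
  filter_upwards [hev, hev2, self_mem_nhdsWithin] with t ht1 ht2 ht0
  have ht0 : t < 0 := ht0
  have hε2 := sq_pos_of_pos hε
  have hPv : ∀ s, v < (P s).1 := fun s => by simp only [hP, ha]; linarith
  have hmem : ∀ s, t ≤ s → s ≤ -t → P s ∈ OmegaRL ε u₁ u₂ := by
    intro s hs1 hs2
    have hst : P s ∈ parabStrip ε := by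
      constructor <;> simp only [hP] <;> linarith
    refine ⟨hst, ?_, ?_⟩
    · exact lt_of_lt_coe hu₁ ((hPv s).le.trans (le_uR hε hst))
    · rw [hL]; exact coe_lt_of_lt ht1 (by linarith [hSanti _ _ hs1])
  have hnR : ∀ s, t ≤ s → s ≤ -t → ¬ uRpt ε (P s) ≤ v := fun s h1 h2 h3 => by
    linarith [le_uR hε (hmem s h1 h2).1, hPv s]
  have hkey := hc (P t) (P (-t)) (hmem t le_rfl (by linarith)) (hmem (-t) (by linarith) le_rfl)
    (by
      intro w hw
      obtain ⟨w1, w2, w3⟩ := vert_segment (by linarith) w hw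
      have : w = P (w.2 - a ^ 2 - 3 / 4 * ε ^ 2) := by
        ext
        · exact w1
        · simp only [hP]; ring
      rw [this]
      exact hmem _ (by linarith) (by linarith))
    (1 / 2) (1 / 2) (by norm_num) (by norm_num) (by norm_num)
  have hmid : (1 / 2 : ℝ) • P t + (1 / 2 : ℝ) • P (-t) = P 0 := by
    ext <;> simp [hP] <;> ring
  rw [hmid] at hkey
  have b1 : BRL ε f mR mL v (P t) = φ t := by
    rw [BRL, if_neg (hnR t le_rfl (by linarith)), if_pos, hL]
    rw [hL]; linarith [hSanti _ _ ht0.le]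
  have b0 : BRL ε f mR mL v (P 0) = φ 0 := by
    rw [BRL, if_neg (hnR 0 ht0.le (by linarith)), if_pos, hL]
    rw [hL, hv0]
  have b2 : BRL ε f mR mL v (P (-t)) = Bang ε f mR mL v (P (-t)) := by
    rw [BRL, if_neg (hnR (-t) (by linarith) le_rfl), if_neg]
    rw [hL, not_le]
    have : S (-t) < S 0 := Real.sqrt_lt_sqrt (by linarith) (by linarith)
    linarith
  have b3 : φ 0 = Bang ε f mR mL v (P 0) := by
    rw [← glueL hε f mR mL (hmem 0 (by linarith) (by linarith)).1 (by rw [hL, hv0]), hL]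
  have b4 : Bang ε f mR mL v (P (-t)) = Bang ε f mR mL v (P 0) - (mL v - mR v) / (4 * ε) * t := by
    simp only [Bang, hP]; ring
  rw [b1, b0, b2, b4, ← b3] at hkey
  linarith


theorem stmt12 (ε : ℝ) (hε : 0 < ε) (u₁ u₂ : EReal) (v : ℝ)
    (hu₁ : u₁ < (v : EReal)) (hu₂ : (v : EReal) < u₂)
    (f : ℝ → ℝ) (hf : ContDiff ℝ 2 f)
    (mR mR' mR'' mL mL' mL'' : ℝ → ℝ)
    (hmR : ∀ u : ℝ, u₁ < (u : EReal) → u ≤ v →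
      HasDerivAt mR (mR' u) u ∧ HasDerivAt mR' (mR'' u) u ∧
      ε * mR' u + mR u = deriv f u ∧ mR'' u ≤ 0)
    (hmL : ∀ u : ℝ, v ≤ u → (u : EReal) < u₂ →
      HasDerivAt mL (mL' u) u ∧ HasDerivAt mL' (mL'' u) u ∧
      -ε * mL' u + mL u = deriv f u ∧ 0 ≤ mL'' u) :
    (∀ x ∈ OmegaRL ε u₁ u₂,
      (uRpt ε x = v →
        mR (uRpt ε x) * (x.1 - uRpt ε x) + f (uRpt ε x) = Bang ε f mR mL v x) ∧
      (uLpt ε x = v →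
        mL (uLpt ε x) * (x.1 - uLpt ε x) + f (uLpt ε x) = Bang ε f mR mL v x)) ∧
    ContinuousOn (BRL ε f mR mL v) (OmegaRL ε u₁ u₂) ∧
    (LocallyConcaveOn (OmegaRL ε u₁ u₂) (BRL ε f mR mL v) ↔
      mR v + mL v = 2 * deriv f v) ∧
    (mR v + mL v = 2 * deriv f v ↔ mR'' v + mL'' v = 0) := by
  have hfd : ∀ u, HasDerivAt f (deriv f u) u := fun u =>
    (hf.differentiable (by norm_num) u).hasDerivAt
  have HR : HypR ε u₁ v f mR mR' mR'' := fun s h1 h2 => by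
    obtain ⟨a, b, c, d⟩ := hmR s h1 h2
    exact ⟨c ▸ hfd s, a, b, d⟩
  have HL : HypL ε u₂ v f mL mL' mL'' := fun s h1 h2 => by
    obtain ⟨a, b, c, d⟩ := hmL s h1 h2
    exact ⟨c ▸ hfd s, a, b, d⟩
  obtain ⟨r1, r2, r3, r4⟩ := hmR v hu₁ le_rfl
  obtain ⟨l1, l2, l3, l4⟩ := hmL v le_rfl hu₂
  have hcond : mR v + mL v = 2 * deriv f v ↔ mR' v = mL' v := by
    constructor
    · intro h
      have : ε * (mR' v - mL' v) = 0 := by linarith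
      rcases mul_eq_zero.1 this with h | h <;> linarith
    · intro h
      rw [h] at r3; linarith
  refine ⟨fun x hx => ⟨glueR hε f mR mL hx.1, glueL hε f mR mL hx.1⟩,
    contBRL hε hf.continuous HR HL, ⟨fun hc => ?_, fun h => ?_⟩, ?_⟩
  · have n1 := necR hε hu₁ hu₂ HR hc
    have n2 := necL hε hu₁ hu₂ HL hc
    rw [div_le_iff₀ (by positivity)] at n1 n2
    rw [hcond]
    have e1 : ε * (mL' v - mR' v) ≤ 0 := by linarith
    have e2 : ε * (mR' v - mL' v) ≤ 0 := by linarith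
    apply le_antisymm
    · by_contra! h
      nlinarith
    · by_contra! h
      nlinarith
  · have h' := hcond.1 h
    exact concave_of hε hu₁ hu₂ HR HL (by rw [h'] at r3 ⊢; linarith) (by rw [h'] at r3; linarith)
  · rw [hcond]
    have hd2 : HasDerivAt (deriv f) (deriv (deriv f) v) v := by
      have h2 : ContDiff ℝ 1 (deriv f) := by
        have : ContDiff ℝ (1 + 1) f := by simpa [one_add_one_eq_two] using hf
        exact (contDiff_succ_iff_deriv.1 this).2.2
      exact (h2.differentiable (by norm_num) v).hasDerivAt
    have eR : ε * mR'' v + mR' v = deriv (deriv f) v := by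
      have g : HasDerivWithinAt (fun u => ε * mR' u + mR u) (ε * mR'' v + mR' v) (Iic v) v :=
        ((r2.const_mul ε).add r1).hasDerivWithinAt
      have hev : ∀ᶠ u : ℝ in nhdsWithin v (Iic v), u₁ < (u : EReal) :=
        (continuous_coe_real_ereal.continuousAt.eventually (lt_mem_nhds hu₁)).filter_mono
          nhdsWithin_le_nhds
      have g2 : HasDerivWithinAt (deriv f) (ε * mR'' v + mR' v) (Iic v) v := by
        refine g.congr_of_eventuallyEq ?_ r3.symm
        filter_upwards [hev, self_mem_nhdsWithin] with u a b
        exact (hmR u a b).2.2.1.symm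
      exact (uniqueDiffOn_Iic v v self_mem_Iic).eq_deriv _ g2 hd2.hasDerivWithinAt
    have eL : -ε * mL'' v + mL' v = deriv (deriv f) v := by
      have g : HasDerivWithinAt (fun u => -ε * mL' u + mL u) (-ε * mL'' v + mL' v) (Ici v) v :=
        ((l2.const_mul (-ε)).add l1).hasDerivWithinAt
      have hev : ∀ᶠ u : ℝ in nhdsWithin v (Ici v), (u : EReal) < u₂ :=
        (continuous_coe_real_ereal.continuousAt.eventually (gt_mem_nhds hu₂)).filter_mono
          nhdsWithin_le_nhds
      have g2 : HasDerivWithinAt (deriv f) (-ε * mL'' v + mL' v) (Ici v) v := by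
        refine g.congr_of_eventuallyEq ?_ l3.symm
        filter_upwards [hev, self_mem_nhdsWithin] with u a b
        exact (hmL u b a).2.2.1.symm
      exact (uniqueDiffOn_Ici v v self_mem_Ici).eq_deriv _ g2 hd2.hasDerivWithinAt
    constructor
    · intro h
      have : ε * (mR'' v + mL'' v) = 0 := by linarith
      exact (mul_eq_zero.1 this).resolve_left hε.ne'
    · intro h
      have : ε * (mR'' v + mL'' v) = 0 := by rw [h, mul_zero]
      linarith
end
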